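/- arXiv:1510.05843 — 2 statements merged into one kernel-verified Lean document; each statement's English description precedes it below -/
import Mathlib

section
/- Let X be a compact metric space with Lebesgue covering dimension dim(X) = d and let T : X → X be an injective continuous map. Assume that dim(P_n) < n/2 for every n ≤ 2d, where P_n is the set of periodic points of period at most n. Then the set of functions h ∈ C(X,[0,1]) for which the (2d+1)-delay observation map h_0^{2d} : X → [0,1]^{2d+1}, x ↦ (h(x), h(Tx), …, h(T^{2d}x)), is a topological embedding of X into [0,1]^{2d+1} is comeagre in C(X,[0,1]) with respect to the supremum metric. -/
open Function Set Topology unitInterval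

/-- A topological space `X` has Lebesgue covering dimension at most `m`:
every finite open cover admits a finite open refinement in which no point
belongs to more than `m + 1` sets. -/
def CovDimLE (X : Type*) [TopologicalSpace X] (m : ℕ) : Prop :=
  ∀ (n : ℕ) (U : Fin n → Set X), (∀ i, IsOpen (U i)) → (⋃ i, U i) = univ →
    ∃ (k : ℕ) (V : Fin k → Set X), (∀ j, IsOpen (V j)) ∧ (⋃ j, V j) = univ ∧
      (∀ j, ∃ i, V j ⊆ U i) ∧ ∀ x : X, Nat.card {j : Fin k // x ∈ V j} ≤ m + 1

/-- The Lebesgue covering dimension of a topological space, as an element of `ℕ∞`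
(`⊤` if no finite bound exists). -/
noncomputable def covDim (X : Type*) [TopologicalSpace X] : ℕ∞ :=
  sInf {e : ℕ∞ | ∃ m : ℕ, e = m ∧ CovDimLE X m}

/-- The set of periodic points of `T` of period at most `n`. -/
def periodicLE {X : Type*} (T : X → X) (n : ℕ) : Set X :=
  {x | ∃ p, 1 ≤ p ∧ p ≤ n ∧ T^[p] x = x}

/-- The `(2d+1)`-delay observation map associated to an observable `h : C(X, [0,1])`
and the dynamics `T : X → X`: `x ↦ (h x, h (T x), …, h (T^{2d} x))`. -/
def delayMap {X : Type*} [TopologicalSpace X] (T : X → X) (d : ℕ)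
    (h : C(X, I)) : X → (Fin (2 * d + 1) → I) :=
  fun x i => h (T^[(i : ℕ)] x)

section Dimension

theorem exists_covDimLE_of_covDim_eq {X : Type*} [TopologicalSpace X] {c : ℕ∞}
    (hc : covDim X = c) (htop : c ≠ ⊤) : ∃ m : ℕ, c = m ∧ CovDimLE X m := by
  have hne : {e : ℕ∞ | ∃ m : ℕ, e = m ∧ CovDimLE X m}.Nonempty := by
    by_contra hcon
    rw [Set.not_nonempty_iff_eq_empty] at hcon
    exact htop (by rw [← hc, covDim, hcon, sInf_empty])
  have := csInf_mem hne
  rw [← covDim, hc] at this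
  exact this

theorem CovDimLE.of_isClosedEmbedding {A Y : Type*} [TopologicalSpace A] [TopologicalSpace Y]
    {m : ℕ} (hY : CovDimLE Y m) {f : A → Y} (hf : IsClosedEmbedding f) : CovDimLE A m := by
  intro n U hU hcov
  choose U' hU'o hU' using fun i => hf.isInducing.isOpen_iff.1 (hU i)
  obtain ⟨k, V, hVo, hVc, hVU, hVm⟩ := hY (n + 1)
    (Fin.cons (range f)ᶜ U')
    (by
      intro i
      refine Fin.cases ?_ (fun i => ?_) i
      · simpa using hf.isClosed_range
      · simpa using hU'o i)
    (by
      rw [eq_univ_iff_forall]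
      intro y
      by_cases hy : y ∈ range f
      · obtain ⟨x, rfl⟩ := hy
        have hx : x ∈ ⋃ i, U i := by rw [hcov]; trivial
        obtain ⟨i, hi⟩ := mem_iUnion.1 hx
        refine mem_iUnion.2 ⟨i.succ, ?_⟩
        rw [← hU' i] at hi
        simpa using hi
      · exact mem_iUnion.2 ⟨0, by simpa using hy⟩)
  by_cases hn : n = 0
  · subst hn
    have : IsEmpty A := by
      rw [← univ_eq_empty_iff, ← hcov]; simp
    exact ⟨0, Fin.elim0, fun j => j.elim0, Subsingleton.elim _ _, fun j => j.elim0,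
      fun x => isEmptyElim x⟩
  have : NeZero n := ⟨hn⟩
  refine ⟨k, fun j => f ⁻¹' V j, fun j => (hVo j).preimage hf.continuous, ?_, fun j => ?_,
    fun x => hVm (f x)⟩
  · rw [← preimage_iUnion, hVc, preimage_univ]
  · obtain ⟨i, hi⟩ := hVU j
    revert hi
    refine Fin.cases (fun hi => ⟨0, fun x hx => ?_⟩) (fun i hi => ⟨i, ?_⟩) i
    · exact absurd (mem_range_self (f := f) x) (by simpa using hi hx)
    · rw [← hU' i]
      exact preimage_mono (by simpa using hi)

theorem CovDimLE.of_isClosed_subset {X : Type*} [TopologicalSpace X] {A B : Set X} {m : ℕ}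
    (hB : CovDimLE B m) (hA : IsClosed A) (hAB : A ⊆ B) : CovDimLE A m :=
  hB.of_isClosedEmbedding (f := inclusion hAB)
    ⟨IsEmbedding.inclusion hAB, by
      rw [range_inclusion]; exact hA.preimage continuous_subtype_val⟩

end Dimension

section PiecewiseLinear

variable {V : Type*} [NormedAddCommGroup V] [NormedSpace ℝ V]

/-- On a compact metric space of covering dimension at most `a`, every continuous vector-valued
map is approximated by the maps `∑ j, φ j • w j`, where `φ` is a finite partition of unity with
at most `a + 1` nonzero members at each point and `w` is close to a fixed family of vectors. -/
theorem CovDimLE.exists_partition_approx {A : Type*} [MetricSpace A] [CompactSpace A] {a : ℕ}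
    (hA : CovDimLE A a) (F : C(A, V)) {ε : ℝ} (hε : 0 < ε) :
    ∃ (r : ℕ) (φ : Fin r → C(A, ℝ)) (v : Fin r → V), (∀ j x, 0 ≤ φ j x) ∧
      (∀ x, ∑ j, φ j x = 1) ∧ (∀ x, (Finset.univ.filter fun j => φ j x ≠ 0).card ≤ a + 1) ∧
      ∀ w : Fin r → V, (∀ j, ‖w j - v j‖ ≤ ε) →
        ∀ x, ‖∑ j, φ j x • w j - F x‖ ≤ 2 * ε := by
  classical
  obtain ⟨t, ht⟩ := (isCompact_univ (X := A)).elim_finite_subcover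
    (fun c : A => F ⁻¹' Metric.ball (F c) ε)
    (fun c => Metric.isOpen_ball.preimage F.continuous)
    (fun x _ => mem_iUnion.2 ⟨x, by simpa using hε⟩)
  obtain ⟨k, W, hWo, hWc, hWU, hWm⟩ := hA t.card
    (fun i => F ⁻¹' Metric.ball (F (t.equivFin.symm i)) ε)
    (fun i => Metric.isOpen_ball.preimage F.continuous)
    (by
      rw [eq_univ_iff_forall]
      intro x
      obtain ⟨c, hc, hx⟩ := mem_iUnion₂.1 (ht (mem_univ x))
      exact mem_iUnion.2 ⟨t.equivFin ⟨c, hc⟩, by simpa using hx⟩)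
  choose i hi using hWU
  obtain ⟨φ, hφ⟩ := PartitionOfUnity.exists_isSubordinate (s := univ) isClosed_univ W hWo
    hWc.ge
  have hmem : ∀ j x, φ j x ≠ 0 → x ∈ W j := fun j x h => hφ j (subset_tsupport _ h)
  have hsum : ∀ x, ∑ j, φ j x = 1 := fun x => by
    rw [← finsum_eq_sum_of_fintype]; exact φ.sum_eq_one (mem_univ x)
  refine ⟨k, φ, fun j => F (t.equivFin.symm (i j)), φ.nonneg, hsum, fun x => ?_,
    fun w hw x => ?_⟩
  · refine le_trans ?_ (hWm x)
    rw [Nat.card_eq_fintype_card, Fintype.card_subtype]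
    exact Finset.card_le_card fun j => by simpa using hmem j x
  · have h1 : ∑ j, φ j x • w j - F x = ∑ j, φ j x • (w j - F x) := by
      simp_rw [smul_sub, Finset.sum_sub_distrib, ← Finset.sum_smul, hsum, one_smul]
    rw [h1]
    calc ‖∑ j, φ j x • (w j - F x)‖ ≤ ∑ j, φ j x * (2 * ε) := by
          refine norm_sum_le_of_le _ fun j _ => ?_
          rw [norm_smul, Real.norm_of_nonneg (φ.nonneg j x)]
          by_cases h0 : φ j x = 0
          · simp [h0]
          refine mul_le_mul_of_nonneg_left ?_ (φ.nonneg j x)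
          have h2 := hi j (hmem j x h0)
          rw [mem_preimage, Metric.mem_ball, dist_comm, dist_eq_norm] at h2
          have h3 := norm_add_le (w j - F (t.equivFin.symm (i j)))
            (F (t.equivFin.symm (i j)) - F x)
          rw [sub_add_sub_cancel] at h3
          linarith [hw j]
      _ = 2 * ε := by rw [← Finset.sum_mul, hsum, one_mul]

theorem sum_smul_mem_affineSpan_support {r : ℕ} (c : Fin r → ℝ) (hc : ∀ j, 0 ≤ c j)
    (hsum : ∑ j, c j = 1) (w : Fin r → V) :
    ∑ j, c j • w j ∈
      affineSpan ℝ (w '' (Finset.univ.filter fun j => c j ≠ 0 : Finset (Fin r))) := by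
  classical
  rw [← Finset.sum_filter_add_sum_filter_not Finset.univ (fun j => c j ≠ 0),
    Finset.sum_eq_zero (s := Finset.univ.filter fun j => ¬ c j ≠ 0), add_zero]
  · refine (AffineSubspace.convex _).sum_mem (fun j _ => hc j) ?_ fun j hj => ?_
    · rw [← hsum, Finset.sum_filter_ne_zero]
    · exact subset_affineSpan ℝ _ (mem_image_of_mem _ hj)
  · intro j hj
    simp only [Finset.mem_filter, not_not] at hj
    simp [hj.2]

/-- Finitely many affine subspaces of codimension larger than `b` can be avoided by all the
affine hulls of `b + 1` points of a finite family, after a small perturbation of the family. -/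
theorem exists_perturbation_affineSpan_disjoint [FiniteDimensional ℝ V] {κ ι : Type*} [Finite κ]
    [Finite ι] (E : κ → AffineSubspace ℝ V) {b : ℕ}
    (hE : ∀ l, Module.finrank ℝ (E l).direction + b < Module.finrank ℝ V) (v : ι → V) {ε : ℝ}
    (hε : 0 < ε) :
    ∃ w : ι → V, (∀ j, ‖w j - v j‖ ≤ ε) ∧ ∀ (l : κ) (S : Finset ι), S.card ≤ b + 1 →
      ∀ x ∈ affineSpan ℝ (w '' S), x ∉ E l := by
  classical
  have := Fintype.ofFinite ι
  suffices H : ∀ s : Finset ι, ∃ w : ι → V, (∀ j, ‖w j - v j‖ ≤ ε) ∧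
      ∀ (l : κ) (S : Finset ι), S ⊆ s → S.card ≤ b + 1 →
      ∀ x ∈ affineSpan ℝ (w '' S), x ∉ E l by
    obtain ⟨w, hw, h⟩ := H Finset.univ
    exact ⟨w, hw, fun l S => h l S (Finset.subset_univ S)⟩
  intro s
  induction s using Finset.induction_on with
  | empty =>
    refine ⟨v, fun j => by simpa using hε.le, fun l S hS _ x hx => ?_⟩
    obtain rfl := Finset.subset_empty.1 hS
    rw [Finset.coe_empty, image_empty, AffineSubspace.span_empty] at hx
    exact absurd hx (AffineSubspace.notMem_bot ℝ V x)
  | insert t s hts ih =>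
    obtain ⟨w, hw, hdisj⟩ := ih
    let _ : MeasurableSpace V := borel V
    have _ : BorelSpace V := ⟨rfl⟩
    let B : κ × {S : Finset ι // S.card ≤ b} → AffineSubspace ℝ V :=
      fun q => affineSpan ℝ (w '' q.2.1 ∪ E q.1)
    have hB : ∀ q, B q ≠ ⊤ := by
      rintro ⟨l, S, hS⟩ htop
      have hrank : ∀ S : Finset ι, Module.finrank ℝ (vectorSpan ℝ (w '' S ∪ E l))
          ≤ Module.finrank ℝ (E l).direction + S.card := by
        intro S
        induction S using Finset.induction_on with
        | empty => rw [Finset.coe_empty, image_empty, empty_union]; exact le_rfl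
        | insert u S hu ih =>
          rw [Finset.coe_insert, image_insert_eq, insert_union, Finset.card_insert_of_notMem hu]
          exact (finrank_vectorSpan_insert_le_set ℝ _ _).trans (by omega)
      have h1 := hrank S
      rw [← direction_affineSpan] at h1
      change Module.finrank ℝ (B (l, ⟨S, hS⟩)).direction ≤ _ at h1
      rw [htop, AffineSubspace.direction_top, finrank_top] at h1
      have := hE l
      omega
    have hnull : MeasureTheory.Measure.addHaar (⋃ q, (B q : Set V)) = 0 :=
      MeasureTheory.measure_iUnion_null fun q =>
        MeasureTheory.Measure.addHaar_affineSubspace _ _ (hB q)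
    obtain ⟨u, hu, huB⟩ : ∃ u ∈ Metric.ball (v t) ε, u ∉ ⋃ q, (B q : Set V) := by
      by_contra! hcon
      exact (Metric.measure_ball_pos MeasureTheory.Measure.addHaar (v t) hε).ne'
        (MeasureTheory.measure_mono_null hcon hnull)
    simp only [mem_iUnion, not_exists] at huB
    rw [Metric.mem_ball, dist_eq_norm] at hu
    have himg : ∀ S : Finset ι, t ∉ S → update w t u '' S = w '' S := fun S hS =>
      image_congr fun j hj => update_of_ne (ne_of_mem_of_not_mem hj hS) _ _
    refine ⟨update w t u, fun j => ?_, fun l S hSs hcard x hx hxE => ?_⟩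
    · by_cases hj : j = t
      · subst hj; simpa using hu.le
      · simpa [hj] using hw j
    · by_cases htS : t ∈ S
      · have hS' : (S.erase t).card ≤ b := by
          have := Finset.card_erase_of_mem htS
          omega
        have hsub : S.erase t ⊆ s := fun j hj =>
          (Finset.mem_insert.1 (hSs (Finset.mem_of_mem_erase hj))).resolve_left
            (Finset.ne_of_mem_erase hj)
        rw [← Finset.insert_erase htS, Finset.coe_insert, image_insert_eq,
          himg _ (Finset.notMem_erase t S), update_self] at hx
        have hnot := huB (l, ⟨S.erase t, hS'⟩)
        rcases (S.erase t).eq_empty_or_nonempty with he | ⟨j, hj⟩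
        · rw [he] at hx
          have hxu : x = u := by simpa using hx
          exact hnot (subset_affineSpan ℝ _ (Or.inr (hxu ▸ hxE)))
        · have hwj : w j ∈ affineSpan ℝ (w '' (S.erase t : Finset ι)) :=
            subset_affineSpan ℝ _ (mem_image_of_mem _ hj)
          rw [← affineSpan_insert_affineSpan, AffineSubspace.mem_affineSpan_insert_iff hwj] at hx
          obtain ⟨c, p, hp, rfl⟩ := hx
          by_cases hc : c = 0
          · refine hdisj l _ hsub (by omega) p hp ?_
            simpa [hc] using hxE
          · apply hnot
            have hle : affineSpan ℝ (w '' (S.erase t : Finset ι)) ≤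
                affineSpan ℝ (w '' (S.erase t : Finset ι) ∪ E l) :=
              affineSpan_mono ℝ subset_union_left
            have h1 := AffineSubspace.smul_vsub_vadd_mem _ (c⁻¹ : ℝ)
              (subset_affineSpan ℝ (w '' (S.erase t : Finset ι) ∪ E l) (Or.inr hxE))
              (hle hp) (hle hwj)
            simpa [hc, smul_smul, B] using h1
      · rw [himg S htS] at hx
        have hsub : S ⊆ s := fun j hj =>
          (Finset.mem_insert.1 (hSs hj)).resolve_left fun h => htS (h ▸ hj)
        exact hdisj l S hsub hcard x hx hxE

/-- A continuous map from a compact metric space of covering dimension at most `b` can be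
perturbed so that it misses finitely many affine subspaces of codimension larger than `b`. -/
theorem CovDimLE.exists_approx_avoiding [FiniteDimensional ℝ V] {A : Type*} [MetricSpace A]
    [CompactSpace A] {b : ℕ} (hA : CovDimLE A b) {κ : Type*} [Finite κ]
    (E : κ → AffineSubspace ℝ V)
    (hE : ∀ l, Module.finrank ℝ (E l).direction + b < Module.finrank ℝ V)
    (F : C(A, V)) {ε : ℝ} (hε : 0 < ε) :
    ∃ G : C(A, V), (∀ x, ‖G x - F x‖ ≤ ε) ∧ ∀ l x, G x ∉ E l := by
  obtain ⟨r, φ, v, h0, h1, hcard, happ⟩ := hA.exists_partition_approx F (half_pos hε)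
  obtain ⟨w, hw, hdisj⟩ := exists_perturbation_affineSpan_disjoint E hE v (half_pos hε)
  refine ⟨∑ j, φ j • ContinuousMap.const A (w j), fun x => ?_, fun l x => ?_⟩
  · simpa [mul_div_cancel₀] using happ w hw x
  · refine hdisj l _ (hcard x) _ ?_
    simpa using sum_smul_mem_affineSpan_support (fun j => φ j x) (fun j => h0 j x) (h1 x) w

/-- A continuous map from a compact metric space of covering dimension at most `a` can be
perturbed so that its image lies in a finite union of affine subspaces spanned by `a + 1`
points. -/
theorem CovDimLE.exists_approx_piecewise {A : Type*} [MetricSpace A]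
    [CompactSpace A] {a : ℕ} (hA : CovDimLE A a) (F : C(A, V)) {ε : ℝ} (hε : 0 < ε) :
    ∃ (G : C(A, V)) (r : ℕ) (v : Fin r → V), (∀ x, ‖G x - F x‖ ≤ ε) ∧
      ∀ x, ∃ S : Finset (Fin r), S.card ≤ a + 1 ∧ G x ∈ affineSpan ℝ (v '' S) := by
  obtain ⟨r, φ, v, h0, h1, hcard, happ⟩ := hA.exists_partition_approx F (half_pos hε)
  refine ⟨∑ j, φ j • ContinuousMap.const A (v j), r, v, fun x => ?_, fun x => ?_⟩
  · simpa [mul_div_cancel₀] using happ v (fun j => by simpa using (half_pos hε).le) x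
  · refine ⟨_, hcard x, ?_⟩
    simpa using sum_smul_mem_affineSpan_support (fun j => φ j x) (fun j => h0 j x) (h1 x) v

end PiecewiseLinear

section Observables

variable {X : Type*} [MetricSpace X]

/-- Prescribing small changes of a continuous function along an injective continuous map from a
compact space. -/
theorem exists_close_extension {Y : Type*} [TopologicalSpace Y] [CompactSpace Y] {e : Y → X}
    (hec : Continuous e) (hei : Injective e) (f : C(Y, ℝ)) (h : C(X, ℝ)) {ε : ℝ} (hε : 0 ≤ ε)
    (hf : ∀ y, |f y - h (e y)| ≤ ε) :
    ∃ g : C(X, ℝ), (∀ x, |g x - h x| ≤ ε) ∧ ∀ y, g (e y) = f y := by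
  obtain ⟨g, hg, hge⟩ := BoundedContinuousFunction.exists_extension_norm_eq_of_isClosedEmbedding
    (BoundedContinuousFunction.mkOfCompact (f - h.comp ⟨e, hec⟩)) (hec.isClosedEmbedding hei)
  refine ⟨h + g.toContinuousMap, fun x => ?_, fun y => ?_⟩
  · have h1 := g.norm_coe_le_norm x
    rw [hg] at h1
    have h2 : ‖BoundedContinuousFunction.mkOfCompact (f - h.comp ⟨e, hec⟩)‖ ≤ ε :=
      (BoundedContinuousFunction.norm_le hε).2 fun y => by simpa using hf y
    simpa using h1.trans h2
  · have := congrFun hge y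
    simp at this
    simp [this]

variable [CompactSpace X]

theorem continuous_delayMap_uncurry {T : X → X} (hT : Continuous T) (d : ℕ) :
    Continuous fun q : C(X, I) × X => delayMap T d q.1 q.2 :=
  continuous_pi fun i =>
    ContinuousEval.continuous_eval.comp (continuous_fst.prodMk ((hT.iterate i).comp continuous_snd))

/-- If real observables can be perturbed to separate the pairs in a compact set by their delays,
then generic `[0,1]`-valued observables do so. -/
theorem residual_delayMap_ne_of_isCompact {T : X → X} (hT : Continuous T) (d : ℕ)
    {K : Set (X × X)} (hK : IsCompact K)
    (hdense : ∀ (h : C(X, ℝ)) (ε : ℝ), 0 < ε → ∃ g : C(X, ℝ), (∀ x, |g x - h x| ≤ ε) ∧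
      ∀ z ∈ K, ∃ i ≤ 2 * d, g (T^[i] z.1) ≠ g (T^[i] z.2)) :
    {h : C(X, I) | ∀ z ∈ K, delayMap T d h z.1 ≠ delayMap T d h z.2} ∈ residual C(X, I) := by
  refine residual_of_dense_open ?_ ?_
  · rw [isOpen_iff_mem_nhds]
    intro h hh
    refine hK.eventually_forall_of_forall_eventually
      (P := fun (h : C(X, I)) z => delayMap T d h z.1 ≠ delayMap T d h z.2) fun z hz => ?_
    have hc := continuous_delayMap_uncurry hT d
    exact (isOpen_ne_fun (hc.comp (continuous_fst.prodMk (continuous_fst.comp continuous_snd)))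
      (hc.comp (continuous_fst.prodMk (continuous_snd.comp continuous_snd)))).mem_nhds (hh z hz)
  · rw [Metric.dense_iff]
    intro h r hr
    obtain ⟨ε, hε0, hε1, hεr⟩ : ∃ ε : ℝ, 0 < ε ∧ ε ≤ 1 / 2 ∧ 4 * ε < r :=
      ⟨min (1 / 2) (r / 8), by positivity, min_le_left _ _, by
        have := min_le_right (1 / 2) (r / 8); linarith⟩
    obtain ⟨g, hg, hgK⟩ := hdense
      ⟨fun x => (1 - 2 * ε) * (h x : ℝ) + ε, by fun_prop⟩ ε hε0
    simp only [ContinuousMap.coe_mk, abs_le] at hg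
    have hmem : ∀ x, g x ∈ I := fun x => by
      obtain ⟨h1, h2⟩ := hg x
      obtain ⟨h3, h4⟩ := (h x).2
      constructor <;> nlinarith
    refine ⟨⟨fun x => ⟨g x, hmem x⟩, by fun_prop⟩, ?_, fun z hz heq => ?_⟩
    · rw [Metric.mem_ball]
      refine ((ContinuousMap.dist_le (by positivity : (0 : ℝ) ≤ 4 * ε)).2 fun x => ?_).trans_lt hεr
      obtain ⟨h1, h2⟩ := hg x
      obtain ⟨h3, h4⟩ := (h x).2
      rw [Subtype.dist_eq, Real.dist_eq, abs_le]
      constructor <;> simp only [ContinuousMap.coe_mk] <;> nlinarith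
    · obtain ⟨i, hi, hne⟩ := hgK z hz
      exact hne (congrArg Subtype.val (congrFun heq ⟨i, by omega⟩))

theorem residual_forall_of_nhdsWithin {Z H : Type*} [TopologicalSpace Z]
    [SecondCountableTopology Z] [TopologicalSpace H] {R : Z → Set H} {S : Set Z}
    (hS : ∀ z ∈ S, ∃ K ∈ 𝓝[S] z, {h | ∀ z ∈ K, h ∈ R z} ∈ residual H) :
    {h | ∀ z ∈ S, h ∈ R z} ∈ residual H := by
  choose! K hK hres using hS
  obtain ⟨t, htS, htc, hcov⟩ := TopologicalSpace.countable_cover_nhdsWithin hK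
  refine Filter.mem_of_superset ((countable_bInter_mem htc).2 fun z hz => hres z (htS hz)) ?_
  intro h hh z hz
  obtain ⟨w, hw, hzw⟩ := mem_iUnion₂.1 (hcov hz)
  exact mem_iInter₂.1 hh w hw z hzw

end Observables

section Separation

variable {X : Type*}

theorem iterate_ne_of_notMem_periodicLE {T : X → X} (hTi : Injective T) {n i j : ℕ} {x : X}
    (hx : x ∉ periodicLE T n) (hi : i ≤ n) (hj : j ≤ n) (hij : i ≠ j) :
    T^[i] x ≠ T^[j] x := by
  wlog hlt : i < j generalizing i j
  · exact (this hj hi hij.symm (by omega)).symm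
  intro heq
  refine hx ⟨j - i, by omega, by omega, (hTi.iterate i) ?_⟩
  rw [← iterate_add_apply, Nat.add_sub_cancel' hlt.le, heq]

variable [MetricSpace X] [CompactSpace X]

/-- The vectors which are `k`-periodic on a window of length `m + k`. -/
def shiftInvariant (m k : ℕ) : Submodule ℝ (Fin (m + k) → ℝ) where
  carrier := {v | ∀ i : Fin m, v (Fin.castAdd k i) = v ⟨i + k, by omega⟩}
  add_mem' hv hw i := by simp [hv i, hw i]
  zero_mem' i := rfl
  smul_mem' c v hv i := by simp [hv i]

theorem finrank_shiftInvariant_le (m : ℕ) {k : ℕ} (hk : 1 ≤ k) :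
    Module.finrank ℝ (shiftInvariant m k) ≤ k := by
  let L : shiftInvariant m k →ₗ[ℝ] (Fin k → ℝ) :=
    { toFun v i := v.1 ⟨i, by omega⟩
      map_add' _ _ := rfl
      map_smul' _ _ := rfl }
  have hL : Injective L := by
    rw [injective_iff_map_eq_zero]
    intro v hv
    have h0 : ∀ (n : ℕ) (hn : n < m + k), v.1 ⟨n, hn⟩ = 0 := by
      intro n
      induction n using Nat.strong_induction_on with
      | _ n ih =>
        intro hn
        by_cases hnk : n < k
        · exact congrFun hv ⟨n, hnk⟩
        · have h1 := v.2 ⟨n - k, by omega⟩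
          have h2 := ih (n - k) (by omega) (by omega)
          simp only [Nat.sub_add_cancel (not_lt.1 hnk)] at h1
          rw [← h1]
          exact h2
    ext ⟨n, hn⟩
    exact h0 n hn
  simpa using LinearMap.finrank_le_finrank_of_injective hL

/-- Generic observables separate `x` from `T^[k] x` along delays, for `x` in an `a`-dimensional
closed set and not periodic of period at most `a + k`. -/
theorem residual_delayMap_ne_iterate {T : X → X} (hTc : Continuous T) (hTi : Injective T)
    {d a k : ℕ} (hk : 1 ≤ k) (had : a ≤ 2 * d) {Q : Set X} (hQ : IsClosed Q) (hdim : CovDimLE Q a) :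
    {h : C(X, I) | ∀ x ∈ Q \ periodicLE T (a + k),
      delayMap T d h x ≠ delayMap T d h (T^[k] x)} ∈ residual C(X, I) := by
  refine residual_forall_of_nhdsWithin
    (R := fun x => {h : C(X, I) | delayMap T d h x ≠ delayMap T d h (T^[k] x)}) fun x hx => ?_
  have hopen : IsOpen {q : X × X | ∀ i j : Fin (a + 1 + k), i ≠ j → T^[i] q.1 ≠ T^[j] q.2} := by
    simp only [ofPred_forall]
    exact isOpen_iInter_of_finite fun i => isOpen_iInter_of_finite fun j =>
      isOpen_iInter_of_finite fun _ => isOpen_ne_fun ((hTc.iterate i).comp continuous_fst)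
        ((hTc.iterate j).comp continuous_snd)
  have hxx : (x, x) ∈ {q : X × X | ∀ i j : Fin (a + 1 + k), i ≠ j → T^[i] q.1 ≠ T^[j] q.2} :=
    fun i j hij => iterate_ne_of_notMem_periodicLE hTi hx.2 (by omega) (by omega)
      (fun h => hij (Fin.ext h))
  obtain ⟨δ, hδ, hsub⟩ := Metric.nhds_basis_closedBall.prod_self.mem_iff.1 (by
    simpa only [nhds_prod_eq] using hopen.mem_nhds hxx)
  have hAc : IsClosed (Q ∩ Metric.closedBall x δ) := hQ.inter Metric.isClosed_closedBall
  set A : Set X := Q ∩ Metric.closedBall x δ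
  have hdisj : ∀ y ∈ A, ∀ z ∈ A, ∀ i j : Fin (a + 1 + k), i ≠ j → T^[i] y ≠ T^[j] z :=
    fun y hy z hz => hsub (mk_mem_prod hy.2 hz.2)
  have : CompactSpace A := isCompact_iff_compactSpace.1 hAc.isCompact
  refine ⟨A, ?_, ?_⟩
  · exact Filter.inter_mem (Filter.mem_of_superset self_mem_nhdsWithin sdiff_subset)
      (mem_nhdsWithin_of_mem_nhds (Metric.closedBall_mem_nhds x hδ))
  have hK : IsCompact ((fun x => (x, T^[k] x)) '' A) :=
    hAc.isCompact.image (continuous_id.prodMk (hTc.iterate k))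
  refine Filter.mem_of_superset (residual_delayMap_ne_of_isCompact hTc d hK fun h ε hε => ?_)
    fun h hh y hy => hh _ (mem_image_of_mem _ hy)
  obtain ⟨G, hG, hGE⟩ := (hdim.of_isClosed_subset hAc inter_subset_left).exists_approx_avoiding
    (fun _ : Unit => (shiftInvariant (a + 1) k).toAffineSubspace)
    (fun _ => by
      have := finrank_shiftInvariant_le (a + 1) hk
      rw [Submodule.toAffineSubspace_direction, Module.finrank_fin_fun]
      omega)
    ⟨fun y i => h (T^[i] (y : X)), continuous_pi fun i =>
      h.continuous.comp ((hTc.iterate i).comp continuous_subtype_val)⟩ hε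
  obtain ⟨g, hg, hge⟩ := exists_close_extension (Y := Fin (a + 1 + k) × A)
    (e := fun q => T^[q.1] (q.2 : X))
    (continuous_prod_of_discrete_left.2 fun i => (hTc.iterate i).comp continuous_subtype_val)
    (by
      rintro ⟨i, y⟩ ⟨j, z⟩ heq
      by_cases hij : i = j
      · subst hij
        obtain rfl : y = z := Subtype.ext (hTi.iterate i heq)
        rfl
      · exact absurd heq (hdisj y y.2 z z.2 i j hij))
    ⟨fun q => G q.2 q.1, continuous_prod_of_discrete_left.2 fun i =>
      (continuous_apply i).comp G.continuous⟩ h hε.le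
    (fun q => (norm_le_pi_norm (G q.2 - _) q.1).trans (hG q.2))
  refine ⟨g, hg, ?_⟩
  rintro _ ⟨y, hy, rfl⟩
  by_contra! hcon
  refine hGE () ⟨y, hy⟩ ?_
  intro i
  have h1 := hge (Fin.castAdd k i, ⟨y, hy⟩)
  have h2 := hge (⟨i + k, by omega⟩, ⟨y, hy⟩)
  have h3 := hcon i (by omega)
  simp only [← iterate_add_apply, ContinuousMap.coe_mk, Fin.val_castAdd] at h1 h2 h3
  rw [← h1, ← h2, h3]

/-- Generic observables separate, along delays, the points of a closed set on which orbit segments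
of length `q` repeat after `p` steps from the points of another closed set, as long as their
orbit segments of length `q` are disjoint and the sum of the dimensions is smaller than `q`. -/
theorem residual_delayMap_ne_of_disjoint_orbits {T : X → X} (hTc : Continuous T)
    (hTi : Injective T) {d a b p q : ℕ} (hp : 1 ≤ p) (hpq : p ≤ q) (hqd : q ≤ 2 * d + 1)
    (hab : a + b < q) {Q Q' : Set X} (hQ : IsClosed Q) (hQ' : IsClosed Q')
    (hQT : ∀ x ∈ Q, ∀ i < q, T^[i % p] x = T^[i] x)
    (hdim : CovDimLE Q a) (hdim' : CovDimLE Q' b) :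
    {h : C(X, I) | ∀ z ∈ {z : X × X | z.1 ∈ Q \ periodicLE T (p - 1) ∧
        z.2 ∈ Q' \ periodicLE T (q - 1) ∧ ∀ i < q, ∀ j < q, T^[i] z.1 ≠ T^[j] z.2},
      delayMap T d h z.1 ≠ delayMap T d h z.2} ∈ residual C(X, I) := by
  refine residual_forall_of_nhdsWithin
    (R := fun z : X × X => {h : C(X, I) | delayMap T d h z.1 ≠ delayMap T d h z.2}) ?_
  rintro ⟨x, y⟩ ⟨⟨hxQ, hxp⟩, ⟨hyQ, hyq⟩, hxy⟩
  let orb : Fin p ⊕ Fin q → X × X → X := Sum.elim (fun i z => T^[i] z.1) fun j z => T^[j] z.2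
  have horb : ∀ s, Continuous (orb s) := by
    rintro (i | j)
    · exact (hTc.iterate i).comp continuous_fst
    · exact (hTc.iterate j).comp continuous_snd
  have hopen : IsOpen {w : (X × X) × (X × X) | ∀ s t, s ≠ t → orb s w.1 ≠ orb t w.2} := by
    simp only [ofPred_forall]
    exact isOpen_iInter_of_finite fun i => isOpen_iInter_of_finite fun j =>
      isOpen_iInter_of_finite fun _ => isOpen_ne_fun ((horb i).comp continuous_fst)
        ((horb j).comp continuous_snd)
  have hmem : ((x, y), (x, y)) ∈
      {w : (X × X) × (X × X) | ∀ s t, s ≠ t → orb s w.1 ≠ orb t w.2} := by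
    rintro (i | i) (j | j) hij
    · exact iterate_ne_of_notMem_periodicLE hTi hxp (by omega) (by omega)
        fun h => hij (congrArg _ (Fin.ext h))
    · exact hxy i (by omega) j (by omega)
    · exact (hxy j (by omega) i (by omega)).symm
    · exact iterate_ne_of_notMem_periodicLE hTi hyq (by omega) (by omega)
        fun h => hij (congrArg _ (Fin.ext h))
  obtain ⟨δ, hδ, hsub⟩ := Metric.nhds_basis_closedBall.prod_self.mem_iff.1 (by
    simpa only [nhds_prod_eq (x := (x, y))] using hopen.mem_nhds hmem)
  have hAc : IsClosed (Q ∩ Metric.closedBall x δ) := hQ.inter Metric.isClosed_closedBall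
  have hBc : IsClosed (Q' ∩ Metric.closedBall y δ) := hQ'.inter Metric.isClosed_closedBall
  set A : Set X := Q ∩ Metric.closedBall x δ
  set B : Set X := Q' ∩ Metric.closedBall y δ
  have hdisj : ∀ z ∈ A ×ˢ B, ∀ w ∈ A ×ˢ B, ∀ s t, s ≠ t → orb s z ≠ orb t w := by
    intro z hz w hw
    refine hsub (mk_mem_prod ?_ ?_)
    · rw [← closedBall_prod_same]; exact ⟨hz.1.2, hz.2.2⟩
    · rw [← closedBall_prod_same]; exact ⟨hw.1.2, hw.2.2⟩
  have hxA : x ∈ A := ⟨hxQ, Metric.mem_closedBall_self hδ.le⟩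
  have hyB : y ∈ B := ⟨hyQ, Metric.mem_closedBall_self hδ.le⟩
  have : CompactSpace A := isCompact_iff_compactSpace.1 hAc.isCompact
  have : CompactSpace B := isCompact_iff_compactSpace.1 hBc.isCompact
  refine ⟨A ×ˢ B, ?_, residual_delayMap_ne_of_isCompact hTc d (hAc.isCompact.prod hBc.isCompact)
    fun h ε hε => ?_⟩
  · refine Filter.mem_of_superset (Filter.inter_mem self_mem_nhdsWithin
      (mem_nhdsWithin_of_mem_nhds (Metric.closedBall_mem_nhds (x, y) hδ))) ?_
    rintro z ⟨hz, hzb⟩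
    rw [← closedBall_prod_same] at hzb
    exact ⟨⟨hz.1.1, hzb.1⟩, ⟨hz.2.1.1, hzb.2⟩⟩
  obtain ⟨F, r, v, hF, hFv⟩ :=
    (hdim.of_isClosed_subset hAc inter_subset_left).exists_approx_piecewise
      (V := Fin p → ℝ) ⟨fun z i => h (T^[i] (z : X)), continuous_pi fun i =>
        h.continuous.comp ((hTc.iterate i).comp continuous_subtype_val)⟩ hε
  let W : (Fin p → ℝ) →ₗ[ℝ] (Fin q → ℝ) :=
    LinearMap.funLeft ℝ ℝ fun j : Fin q => (⟨j % p, Nat.mod_lt _ hp⟩ : Fin p)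
  obtain ⟨G, hG, hGE⟩ :=
    (hdim'.of_isClosed_subset hBc inter_subset_left).exists_approx_avoiding
      (fun S : {S : Finset (Fin r) // S.card ≤ a + 1} => affineSpan ℝ ((W ∘ v) '' S.1))
      (fun S => by
        classical
        have h1 : Module.finrank ℝ (vectorSpan ℝ ((W ∘ v) '' S.1)) ≤ a := by
          rcases S.1.eq_empty_or_nonempty with he | hne
          · have : vectorSpan ℝ ((W ∘ v) '' S.1) = ⊥ := by
              rw [he, Finset.coe_empty, image_empty, vectorSpan_empty]
            rw [this, finrank_bot]
            exact Nat.zero_le a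
          · have := finrank_vectorSpan_image_finset_le ℝ (W ∘ v) S.1
              (n := S.1.card - 1) (by have := hne.card_pos; omega)
            rw [Finset.coe_image] at this
            have := S.2
            omega
        rw [direction_affineSpan, Module.finrank_fin_fun]
        omega)
      ⟨fun z i => h (T^[i] (z : X)), continuous_pi fun i =>
        h.continuous.comp ((hTc.iterate i).comp continuous_subtype_val)⟩ hε
  obtain ⟨g, hg, hge⟩ := exists_close_extension (Y := (Fin p × A) ⊕ (Fin q × B))
    (e := Sum.elim (fun s => T^[s.1] (s.2 : X)) (fun s => T^[s.1] (s.2 : X)))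
    (continuous_sumElim.2 ⟨continuous_prod_of_discrete_left.2 fun i =>
        (hTc.iterate i).comp continuous_subtype_val,
      continuous_prod_of_discrete_left.2 fun i =>
        (hTc.iterate i).comp continuous_subtype_val⟩)
    (by
      rintro (⟨i, z⟩ | ⟨i, z⟩) (⟨j, w⟩ | ⟨j, w⟩) heq
      · by_cases hij : i = j
        · subst hij
          obtain rfl : z = w := Subtype.ext (hTi.iterate i heq)
          rfl
        · exact absurd heq (hdisj (z, y) ⟨z.2, hyB⟩ (w, y) ⟨w.2, hyB⟩ (.inl i) (.inl j)
            (by simpa using hij))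
      · exact absurd heq (hdisj (z, y) ⟨z.2, hyB⟩ (x, w) ⟨hxA, w.2⟩ (.inl i) (.inr j) (by simp))
      · exact absurd heq (hdisj (x, z) ⟨hxA, z.2⟩ (w, y) ⟨w.2, hyB⟩ (.inr i) (.inl j) (by simp))
      · by_cases hij : i = j
        · subst hij
          obtain rfl : z = w := Subtype.ext (hTi.iterate i heq)
          rfl
        · exact absurd heq (hdisj (x, z) ⟨hxA, z.2⟩ (x, w) ⟨hxA, w.2⟩ (.inr i) (.inr j)
            (by simpa using hij)))
    ⟨Sum.elim (fun s => F s.2 s.1) (fun s => G s.2 s.1),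
      continuous_sumElim.2 ⟨continuous_prod_of_discrete_left.2 fun i =>
          (continuous_apply i).comp F.continuous,
        continuous_prod_of_discrete_left.2 fun i => (continuous_apply i).comp G.continuous⟩⟩
    h hε.le
    (by
      rintro (s | s)
      · exact (norm_le_pi_norm (F s.2 - _) s.1).trans (hF s.2)
      · exact (norm_le_pi_norm (G s.2 - _) s.1).trans (hG s.2))
  refine ⟨g, hg, ?_⟩
  rintro ⟨z, w⟩ ⟨hz, hw⟩
  by_contra! hcon
  obtain ⟨S, hS, hFS⟩ := hFv ⟨z, hz⟩
  refine hGE ⟨S, hS⟩ ⟨w, hw⟩ ?_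
  have hGW : G ⟨w, hw⟩ = W (F ⟨z, hz⟩) := by
    ext j
    have h1 := hge (.inl (⟨j % p, Nat.mod_lt _ hp⟩, ⟨z, hz⟩))
    have h2 := hge (.inr (j, ⟨w, hw⟩))
    have h3 := hcon j (by omega)
    simp only [Sum.elim_inl, Sum.elim_inr, ContinuousMap.coe_mk] at h1 h2 h3
    rw [hQT z hz.1 j j.2] at h1
    rw [← h2, ← h3, h1]
    rfl
  rw [hGW, image_comp]
  have := AffineSubspace.map_span W.toAffineMap (v '' (S : Set (Fin r)))
  change _ = affineSpan ℝ (W '' (v '' (S : Set (Fin r)))) at this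
  rw [← this]
  exact AffineSubspace.mem_map_of_mem W.toAffineMap hFS

end Separation

theorem mem_periodicLE_iff {X : Type*} {T : X → X} {n : ℕ} {x : X} :
    x ∈ periodicLE T n ↔ 0 < minimalPeriod T x ∧ minimalPeriod T x ≤ n := by
  constructor
  · rintro ⟨p, hp, hpn, hx⟩
    have hx : IsPeriodicPt T p x := hx
    exact ⟨hx.minimalPeriod_pos hp, (hx.minimalPeriod_le hp).trans hpn⟩
  · rintro ⟨h0, hn⟩
    exact ⟨_, h0, hn, iterate_minimalPeriod⟩

theorem stmt0 {X : Type*} [MetricSpace X] [CompactSpace X]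
    (T : X → X) (hTc : Continuous T) (hTi : Function.Injective T)
    (d : ℕ) (hdim : covDim X = d)
    (hper : ∀ n : ℕ, 1 ≤ n → n ≤ 2 * d →
      2 * covDim (periodicLE T n) < (n : ℕ∞)) :
    {h : C(X, I) | IsEmbedding (delayMap T d h)} ∈ residual C(X, I) := by
  let Q : ℕ → Set X := fun p => {x | p ≤ 2 * d → T^[p] x = x}
  have hQ : ∀ p, IsClosed (Q p) := fun p => by
    by_cases hp : p ≤ 2 * d
    · simpa [Q, hp] using isClosed_eq (hTc.iterate p) continuous_id
    · simp [Q, hp]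
  have hX : CovDimLE X d := by
    obtain ⟨m, hm, hX⟩ := exists_covDimLE_of_covDim_eq hdim (ENat.natCast_ne_top d)
    rwa [Nat.cast_inj.1 hm]
  have hQdim : ∀ p, 1 ≤ p → p ≤ 2 * d + 1 → ∃ a, 2 * a < p ∧ CovDimLE (Q p) a := by
    intro p hp hpd
    by_cases hp' : p ≤ 2 * d
    · have hlt := hper p hp hp'
      obtain ⟨a, ha, hdimP⟩ := exists_covDimLE_of_covDim_eq (X := periodicLE T p) rfl (by
        intro htop
        rw [htop] at hlt
        simp [ENat.mul_top] at hlt)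
      rw [ha] at hlt
      exact ⟨a, by exact_mod_cast hlt, hdimP.of_isClosed_subset (hQ p)
        fun x hx => ⟨p, hp, le_rfl, hx hp'⟩⟩
    · exact ⟨d, by omega, hX.of_isClosedEmbedding (hQ p).isClosedEmbedding_subtypeVal⟩
  choose! a ha hadim using hQdim
  have hiter : ∀ᶠ h in residual C(X, I), ∀ k p, 1 ≤ k → 1 ≤ p → p ≤ 2 * d + 1 →
      ∀ x ∈ Q p \ periodicLE T (a p + k), delayMap T d h x ≠ delayMap T d h (T^[k] x) := by
    simp only [eventually_countable_forall]
    intro k p hk hp hpd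
    have := ha p hp hpd
    exact residual_delayMap_ne_iterate hTc hTi hk (by omega) (hQ p) (hadim p hp hpd)
  have hdisj : ∀ᶠ h in residual C(X, I), ∀ p q, 1 ≤ p → p ≤ q → q ≤ 2 * d + 1 →
      ∀ z ∈ {z : X × X | z.1 ∈ Q p \ periodicLE T (p - 1) ∧
        z.2 ∈ Q q \ periodicLE T (q - 1) ∧ ∀ i < q, ∀ j < q, T^[i] z.1 ≠ T^[j] z.2},
      delayMap T d h z.1 ≠ delayMap T d h z.2 := by
    simp only [eventually_countable_forall]
    intro p q hp hpq hqd
    have h1 := ha p hp (by omega)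
    have h2 := ha q (by omega) hqd
    refine residual_delayMap_ne_of_disjoint_orbits hTc hTi hp hpq hqd
      (by omega : a p + a q < q) (hQ p) (hQ q) (fun x hx i hi => ?_) (hadim p hp (by omega))
      (hadim q (by omega) hqd)
    by_cases hp' : p ≤ 2 * d
    · exact IsPeriodicPt.iterate_mod_apply (hx hp') i
    · rw [Nat.mod_eq_of_lt (by omega)]
  filter_upwards [hiter, hdisj] with h hiter hdisj
  have hstratum : ∀ z, ∃ r, 1 ≤ r ∧ r ≤ 2 * d + 1 ∧ z ∈ Q r ∧
      (minimalPeriod T z = 0 ∨ r ≤ minimalPeriod T z) := by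
    intro z
    by_cases hz : minimalPeriod T z = 0 ∨ 2 * d + 1 ≤ minimalPeriod T z
    · exact ⟨2 * d + 1, by omega, le_rfl, fun hle => by omega, hz⟩
    · exact ⟨minimalPeriod T z, by omega, by omega, fun _ => iterate_minimalPeriod, Or.inr le_rfl⟩
  have hsame : ∀ z k, T^[k] z ≠ z → delayMap T d h z ≠ delayMap T d h (T^[k] z) := by
    intro z k hne
    obtain ⟨r, hr, hrd, hzQ, hzr⟩ := hstratum z
    have har := ha r hr hrd
    by_cases hs : minimalPeriod T z = 0
    · refine hiter k r (Nat.one_le_iff_ne_zero.2 ?_) hr hrd z ⟨hzQ, ?_⟩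
      · rintro rfl
        exact hne rfl
      · rw [mem_periodicLE_iff]
        omega
    have hmod := iterate_mod_minimalPeriod_eq (f := T) (x := z) (n := k)
    have hlt := Nat.mod_lt k (Nat.pos_of_ne_zero hs)
    rw [← hmod] at hne ⊢
    set s := minimalPeriod T z with hsdef
    set m := k % s
    have hm : m ≠ 0 := by
      intro hm
      rw [hm] at hne
      exact hne rfl
    by_cases ham : a r + m < s
    · refine hiter m r (by omega) hr hrd z ⟨hzQ, ?_⟩
      rw [mem_periodicLE_iff]
      omega
    · have hper' : minimalPeriod T (T^[m] z) = s :=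
        minimalPeriod_apply_iterate
          (minimalPeriod_pos_iff_mem_periodicPts.1 (Nat.pos_of_ne_zero hs)) m
      have hback : T^[s - m] (T^[m] z) = z := by
        rw [← iterate_add_apply, Nat.sub_add_cancel hlt.le, hsdef, iterate_minimalPeriod]
      have hne' := hiter (s - m) r (by omega) hr hrd (T^[m] z) ⟨fun hle => ?_, ?_⟩
      · rw [hback] at hne'
        exact hne'.symm
      · rw [← iterate_add_apply, add_comm, iterate_add_apply, hzQ hle]
      · rw [mem_periodicLE_iff, hper']
        omega
  have hcont : Continuous (delayMap T d h) :=
    (continuous_delayMap_uncurry hTc d).comp (continuous_const.prodMk continuous_id)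
  refine (hcont.isClosedEmbedding fun x y hxy => ?_).isEmbedding
  by_contra hne
  obtain ⟨p, hp, hpd, hxQ, hxp⟩ := hstratum x
  obtain ⟨q, hq, hqd, hyQ, hyq⟩ := hstratum y
  wlog hpq : p ≤ q generalizing x y p q
  · exact this y x hxy.symm (Ne.symm hne) q hq hqd hyQ hyq p hp hpd hxQ hxp (by omega)
  by_cases hmeet : ∃ i < q, ∃ j < q, T^[i] x = T^[j] y
  · obtain ⟨i, -, j, -, hij⟩ := hmeet
    rcases le_total i j with hle | hle
    · have hx : T^[j - i] y = x := (hTi.iterate i) (by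
        rw [← iterate_add_apply, Nat.add_sub_cancel' hle, hij])
      exact hsame y (j - i) (hx ▸ hne) (by rw [hx, hxy])
    · have hy : T^[i - j] x = y := (hTi.iterate j) (by
        rw [← iterate_add_apply, Nat.add_sub_cancel' hle, hij])
      exact hsame x (i - j) (hy ▸ Ne.symm hne) (by rw [hy, hxy])
  · push Not at hmeet
    refine hdisj p q hp hpq hqd (x, y) ⟨⟨hxQ, ?_⟩, ⟨hyQ, ?_⟩, hmeet⟩ hxy
    · rw [mem_periodicLE_iff]
      dsimp only
      omega
    · rw [mem_periodicLE_iff]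
      dsimp only
      omega
end

section
/- Let X be a compact metric space with Lebesgue covering dimension dim(X) = d and let T : X → X be an injective continuous map with dim(P_n) < n/2 for every n ≤ 2d. Then (X×X)∖Δ can be written as a countable union of compact sets K_1, K_2, … such that for every i the set D_{K_i} = {h ∈ C(X,[0,1]) : h_0^{2d}(x) ≠ h_0^{2d}(y) for all (x,y) ∈ K_i} is open and dense in C(X,[0,1]) with the supremum metric. -/
open Function Set Topology unitInterval

/-- `D_K`: the set of observables `h` such that the `(2d+1)`-delay observation map
separates every pair `(x, y) ∈ K`. -/
def DSet {X : Type*} [TopologicalSpace X] (T : X → X) (d : ℕ)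
    (K : Set (X × X)) : Set C(X, I) :=
  {h | ∀ p ∈ K, delayMap T d h p.1 ≠ delayMap T d h p.2}

theorem CovDimLE.of_covDim_eq {X : Type*} [TopologicalSpace X] {m : ℕ} (h : covDim X = m) :
    CovDimLE X m := by
  have hne : {e : ℕ∞ | ∃ m : ℕ, e = m ∧ CovDimLE X m}.Nonempty := by
    by_contra hne
    rw [not_nonempty_iff_eq_empty] at hne
    simp [covDim, hne] at h
  obtain ⟨k, hk, hkX⟩ := csInf_mem hne
  have : k = m := by
    rw [covDim, hk] at h
    exact_mod_cast h
  exact this ▸ hkX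

theorem CovDimLE.of_isClosedEmbedding_s1 {Y Z : Type*} [TopologicalSpace Y] [TopologicalSpace Z]
    {e : Y → Z} (he : IsClosedEmbedding e) {m : ℕ} (hZ : CovDimLE Z m) : CovDimLE Y m := by
  intro n U hU hcov
  rcases n with _ | n
  · refine ⟨0, fun i => i.elim0, fun i => i.elim0, ?_, fun i => i.elim0, fun x => by simp⟩
    rw [← hcov]
    simp
  choose O hO hOU using fun i => he.isInducing.isOpen_iff.1 (hU i)
  obtain ⟨k, V, hV, hVcov, hVref, hVord⟩ := hZ (n + 2) (Fin.cons (range e)ᶜ O)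
    (fun i => by
      refine Fin.cases ?_ (fun i => ?_) i
      · exact he.isClosed_range.isOpen_compl
      · exact hO i)
    (by
      rw [eq_univ_iff_forall]
      intro z
      by_cases hz : z ∈ range e
      · obtain ⟨y, rfl⟩ := hz
        obtain ⟨i, hi⟩ := mem_iUnion.1 (hcov ▸ mem_univ y : y ∈ ⋃ i, U i)
        rw [← hOU i] at hi
        exact mem_iUnion.2 ⟨i.succ, hi⟩
      · exact mem_iUnion.2 ⟨0, hz⟩)
  refine ⟨k, fun j => e ⁻¹' V j, fun j => (hV j).preimage he.continuous, ?_, fun j => ?_,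
    fun x => hVord (e x)⟩
  · rw [← preimage_iUnion, hVcov, preimage_univ]
  · obtain ⟨i, hi⟩ := hVref j
    induction i using Fin.cases with
    | zero => exact ⟨0, fun y hy => absurd (mem_range_self y) (hi hy)⟩
    | succ i => exact ⟨i, fun y hy => hOU i ▸ hi hy⟩

theorem exists_mem_forall_notMem_affineSubspace {n : ℕ} {ι : Type*} [Finite ι]
    (A : ι → AffineSubspace ℝ (Fin n → ℝ)) (hA : ∀ i, A i ≠ ⊤)
    {O : Set (Fin n → ℝ)} (hO : IsOpen O) (hne : O.Nonempty) :
    ∃ v ∈ O, ∀ i, v ∉ A i := by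
  by_contra! hcon
  have hsub : O ⊆ ⋃ i, (A i : Set (Fin n → ℝ)) := fun v hv => mem_iUnion.2 (hcon v hv)
  have hzero : MeasureTheory.volume (⋃ i, (A i : Set (Fin n → ℝ))) = 0 :=
    MeasureTheory.measure_iUnion_null fun i =>
      MeasureTheory.Measure.addHaar_affineSubspace _ _ (hA i)
  exact (hO.measure_pos MeasureTheory.volume hne).ne'
    (MeasureTheory.measure_mono_null hsub hzero)

theorem exists_generalPosition {n s : ℕ} {E ι κ : Type*} [AddCommGroup E] [Module ℝ E]
    [FiniteDimensional ℝ E] [Fintype ι] [Fintype κ]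
    (L : (Fin n → ℝ) →ᵃ[ℝ] E) (hL : Submodule.span ℝ (range L) = ⊤)
    (hs : s < Module.finrank ℝ E) (b : ι → E)
    (O : κ → Set (Fin n → ℝ)) (hO : ∀ k, IsOpen (O k)) (hne : ∀ k, (O k).Nonempty) :
    ∃ v : κ → Fin n → ℝ, (∀ k, v k ∈ O k) ∧ ∀ (lam : ι → ℝ) (mu : κ → ℝ),
      (support lam).ncard + (support mu).ncard ≤ s + 1 →
      ∑ i, lam i • b i + ∑ k, mu k • L (v k) = 0 → mu = 0 := by
  classical
  suffices H : ∀ A : Finset κ, ∃ v : κ → Fin n → ℝ, (∀ k, v k ∈ O k) ∧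
      ∀ (lam : ι → ℝ) (mu : κ → ℝ), support mu ⊆ A →
      (support lam).ncard + (support mu).ncard ≤ s + 1 →
      ∑ i, lam i • b i + ∑ k, mu k • L (v k) = 0 → mu = 0 by
    obtain ⟨v, hv, h⟩ := H Finset.univ
    exact ⟨v, hv, fun lam mu => h lam mu (by simp)⟩
  intro A
  induction A using Finset.induction_on with
  | empty =>
    choose v hv using hne
    refine ⟨v, hv, fun lam mu hmu _ _ => ?_⟩
    simpa using hmu
  | insert a A ha ih =>
    obtain ⟨v, hv, hvA⟩ := ih
    let S : {J : Finset ι × Finset κ // J.1.card + J.2.card ≤ s} → Submodule ℝ E := fun J =>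
      Submodule.span ℝ ((J.1.1.image b ∪ J.1.2.image fun k => L (v k) : Finset E) : Set E)
    have hS : ∀ J, (S J).toAffineSubspace.comap L ≠ ⊤ := by
      intro J hJ
      have h1 : Submodule.span ℝ (range L) ≤ S J := by
        rw [Submodule.span_le]
        rintro _ ⟨w, rfl⟩
        have : w ∈ (S J).toAffineSubspace.comap L := hJ ▸ AffineSubspace.mem_top ..
        simpa using this
      rw [hL] at h1
      have h2 : Module.finrank ℝ (S J) ≤ s :=
        (finrank_span_finset_le_card _).trans <| (Finset.card_union_le _ _).trans <|
          (add_le_add Finset.card_image_le Finset.card_image_le).trans J.2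
      rw [top_le_iff.1 h1, finrank_top] at h2
      omega
    obtain ⟨w, hwO, hw⟩ := exists_mem_forall_notMem_affineSubspace _ hS (hO a) (hne a)
    have hmem : ∀ (J : Finset ι × Finset κ), J.1.card + J.2.card ≤ s → L w ∉
        Submodule.span ℝ ((J.1.image b ∪ J.2.image fun k => L (v k) : Finset E) : Set E) :=
      fun J hJ hLw => hw ⟨J, hJ⟩ (by simpa [S] using hLw)
    refine ⟨update v a w, fun k => ?_, fun lam mu hsupp hcard hsum => ?_⟩
    · by_cases hk : k = a
      · subst hk; simpa using hwO
      · simpa [hk] using hv k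
    have hrest : ∑ k ∈ Finset.univ.erase a, mu k • L (update v a w k) =
        ∑ k ∈ Finset.univ.erase a, mu k • L (v k) :=
      Finset.sum_congr rfl fun k hk => by rw [update_of_ne (Finset.ne_of_mem_erase hk)]
    rw [← Finset.add_sum_erase _ _ (Finset.mem_univ a), hrest, update_self] at hsum
    by_cases hmu : mu a = 0
    · refine hvA lam mu (fun k hk => ?_) hcard ?_
      · have := hsupp hk
        rw [Finset.coe_insert] at this
        exact this.resolve_left (by rintro rfl; exact hk hmu)
      · rw [← Finset.add_sum_erase _ _ (Finset.mem_univ a), hmu]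
        simpa [hmu] using hsum
    · exfalso
      refine hmem (Finset.univ.filter (lam · ≠ 0), (Finset.univ.erase a).filter (mu · ≠ 0)) ?_ ?_
      · have h1 : (support lam).ncard = (Finset.univ.filter (lam · ≠ 0)).card := by
          rw [← ncard_coe_finset]; congr 1; ext; simp
        have h2 : (support mu).ncard = ((Finset.univ.erase a).filter (mu · ≠ 0)).card + 1 := by
          rw [← Finset.card_insert_of_notMem (a := a) (by simp), ← ncard_coe_finset]
          congr 1; ext k
          by_cases hk : k = a <;> simp [hk, hmu]
        dsimp only
        omega
      · set P := Submodule.span ℝ (((Finset.univ.filter (lam · ≠ 0)).image b ∪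
          ((Finset.univ.erase a).filter (mu · ≠ 0)).image fun k => L (v k) : Finset E) : Set E)
        have h1 : ∑ i, lam i • b i ∈ P := by
          refine Submodule.sum_mem _ fun i _ => ?_
          by_cases hi : lam i = 0
          · simp [hi]
          · refine Submodule.smul_mem _ _ (Submodule.subset_span ?_)
            simp only [Finset.coe_union, Finset.coe_image]
            exact Or.inl ⟨i, by simpa using hi, rfl⟩
        have h2 : ∑ k ∈ Finset.univ.erase a, mu k • L (v k) ∈ P := by
          refine Submodule.sum_mem _ fun k hk => ?_
          by_cases hi : mu k = 0
          · simp [hi]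
          · refine Submodule.smul_mem _ _ (Submodule.subset_span ?_)
            simp only [Finset.coe_union, Finset.coe_image]
            exact Or.inr ⟨k, by simpa using ⟨Finset.ne_of_mem_erase hk, hi⟩, rfl⟩
        have h3 : mu a • L w ∈ P := by
          have : mu a • L w = -(∑ i, lam i • b i + ∑ k ∈ Finset.univ.erase a, mu k • L (v k)) := by
            rw [eq_neg_iff_add_eq_zero, ← hsum]; abel
          rw [this]
          exact P.neg_mem (P.add_mem h1 h2)
        exact (P.smul_mem_iff hmu).1 h3

theorem exists_forall_sub_eq {J : Type*} {a b : J → ℕ} (hb : Injective b)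
    (hab : ∀ i, a i < b i) (t : J → ℝ) (n : ℕ) :
    ∃ v : ℕ → ℝ, ∀ i, b i < n → v (a i) - v (b i) = t i := by
  induction n with
  | zero => exact ⟨0, by simp⟩
  | succ n ih =>
    obtain ⟨v, hv⟩ := ih
    have hlt : ∀ r : ℝ, ∀ i, b i < n → update v n r (a i) - update v n r (b i) = t i := by
      intro r i hi
      rw [update_of_ne ((hab i).trans hi).ne, update_of_ne hi.ne, hv i hi]
    by_cases h : ∃ i, b i = n
    · obtain ⟨i, hi⟩ := h
      refine ⟨update v n (v (a i) - t i), fun j hj => ?_⟩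
      rcases (Nat.lt_succ_iff.1 hj).lt_or_eq with hj | hj
      · exact hlt _ j hj
      · obtain rfl := hb (hj.trans hi.symm)
        rw [hj, update_self, update_of_ne (hj ▸ hab j).ne]
        ring
    · exact ⟨v, fun j hj => hv j ((Nat.lt_succ_iff.1 hj).lt_of_ne fun hj => h ⟨j, hj⟩)⟩

/-- A finite partition of unity of order at most `m + 1`, together with points of a cube close to
the values of `f` on the supports. -/
theorem CovDimLE.exists_partitionOfUnity {Y : Type*} [TopologicalSpace Y] [CompactSpace Y]
    [T2Space Y] {m n : ℕ} (hY : CovDimLE Y m) {f : Y → Fin n → ℝ} (hf : Continuous f)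
    (hf01 : ∀ y i, f y i ∈ I) {δ : ℝ} (hδ : 0 < δ) :
    ∃ (k : ℕ) (ψ : Fin k → C(Y, ℝ)) (c : Fin k → Fin n → ℝ),
      (∀ j y, 0 ≤ ψ j y) ∧ (∀ y, ∑ j, ψ j y = 1) ∧
      (∀ y, (support fun j => ψ j y).ncard ≤ m + 1) ∧ (∀ j i, c j i ∈ I) ∧
      ∀ j y, ψ j y ≠ 0 → ∀ i, |c j i - f y i| < δ := by
  obtain ⟨t, ht⟩ := isCompact_univ.elim_finite_subcover (fun x => f ⁻¹' Metric.ball (f x) δ)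
    (fun x => Metric.isOpen_ball.preimage hf)
    (fun x _ => mem_iUnion.2 ⟨x, Metric.mem_ball_self hδ⟩)
  let center : Fin t.card → Y := fun j => t.equivFin.symm j
  obtain ⟨k, V, hV, hVcov, hVref, hVord⟩ :=
    hY t.card (fun j => f ⁻¹' Metric.ball (f (center j)) δ)
    (fun j => Metric.isOpen_ball.preimage hf) (by
      rw [eq_univ_iff_forall]
      intro y
      obtain ⟨x, hx, hy⟩ := mem_iUnion₂.1 (ht (mem_univ y))
      exact mem_iUnion.2 ⟨t.equivFin ⟨x, hx⟩, by simpa [center] using hy⟩)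
  choose r hr using hVref
  obtain ⟨ψ, hψ⟩ := PartitionOfUnity.exists_isSubordinate isClosed_univ V hV hVcov.ge
  have hmem : ∀ j y, ψ j y ≠ 0 → y ∈ V j := fun j y hy => hψ j (subset_tsupport _ hy)
  refine ⟨k, fun j => ψ j, fun j => f (center (r j)), fun j y => ψ.nonneg j y, fun y => ?_,
    fun y => ?_, fun j i => hf01 _ _, fun j y hy i => ?_⟩
  · rw [← finsum_eq_sum_of_fintype]
    exact ψ.sum_eq_one (mem_univ y)
  · refine le_trans ?_ (hVord y)
    change _ ≤ ({j | y ∈ V j} : Set (Fin k)).ncard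
    exact ncard_le_ncard (fun j hj => hmem j y hj) (toFinite _)
  · have h1 : dist (f y) (f (center (r j))) < δ := hr j (hmem j y hy)
    rw [← Real.dist_eq, dist_comm]
    exact (dist_le_pi_dist _ _ i).trans_lt h1

theorem exists_extension_dist_le {X Z : Type*} [TopologicalSpace X] [CompactSpace X]
    [NormalSpace X] [TopologicalSpace Z] [CompactSpace Z] {e : Z → X} (he : IsClosedEmbedding e)
    (f : C(X, I)) (F : C(Z, ℝ)) (hF : ∀ z, F z ∈ I) {ε : ℝ} (hε : 0 ≤ ε)
    (hFf : ∀ z, |F z - f (e z)| ≤ ε) :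
    ∃ h : C(X, I), dist h f ≤ ε ∧ ∀ z, (h (e z) : ℝ) = F z := by
  let fe : C(Z, ℝ) := ⟨fun z => f (e z), by have := he.continuous; fun_prop⟩
  obtain ⟨g, hg, hge⟩ := BoundedContinuousFunction.exists_extension_norm_eq_of_isClosedEmbedding
    (BoundedContinuousFunction.mkOfCompact (F - fe)) he
  have hgε : ‖g‖ ≤ ε := by
    rw [hg, BoundedContinuousFunction.norm_le hε]
    exact fun z => hFf z
  refine ⟨⟨fun x => projIcc 0 1 zero_le_one (f x + g x), by fun_prop⟩, ?_, fun z => ?_⟩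
  · rw [ContinuousMap.dist_le hε]
    intro x
    have h1 : |g x| ≤ ε := (g.norm_coe_le_norm x).trans hgε
    have h2 := (f x).2
    rw [abs_le] at h1
    rw [Subtype.dist_eq, Real.dist_eq, ContinuousMap.coe_mk, coe_projIcc, abs_le]
    constructor
    · have : min 1 ((f x : ℝ) + g x) ≥ f x - ε := le_min (by linarith [h2.2]) (by linarith)
      linarith [le_max_right 0 (min 1 ((f x : ℝ) + g x))]
    · have : max 0 (min 1 ((f x : ℝ) + g x)) ≤ f x + ε :=
        max_le (by linarith [h2.1]) ((min_le_right _ _).trans (by linarith))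
      linarith
  · have h1 : g (e z) = F z - f (e z) := congrFun hge z
    rw [ContinuousMap.coe_mk, h1, add_sub_cancel, projIcc_of_mem _ (hF z)]

theorem abs_sum_mul_sub_le {κ : Type*} [Fintype κ] {w c : κ → ℝ} {r ε : ℝ} (hw : ∀ j, 0 ≤ w j)
    (hsum : ∑ j, w j = 1) (hc : ∀ j, w j ≠ 0 → |c j - r| ≤ ε) : |∑ j, w j * c j - r| ≤ ε := by
  have h1 : ∑ j, w j * c j - r = ∑ j, w j * (c j - r) := by
    simp_rw [mul_sub, Finset.sum_sub_distrib, ← Finset.sum_mul, hsum, one_mul]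
  rw [h1]
  calc |∑ j, w j * (c j - r)| ≤ ∑ j, |w j * (c j - r)| := Finset.abs_sum_le_sum_abs _ _
    _ ≤ ∑ j, w j * ε := Finset.sum_le_sum fun j _ => by
        rw [abs_mul, abs_of_nonneg (hw j)]
        by_cases h : w j = 0
        · simp [h]
        · exact mul_le_mul_of_nonneg_left (hc j h) (hw j)
    _ = ε := by rw [← Finset.sum_mul, hsum, one_mul]

theorem sum_mul_mem_unitInterval {κ : Type*} [Fintype κ] {w c : κ → ℝ} (hw : ∀ j, 0 ≤ w j)
    (hsum : ∑ j, w j = 1) (hc : ∀ j, c j ∈ I) : ∑ j, w j * c j ∈ I :=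
  ⟨Finset.sum_nonneg fun j _ => mul_nonneg (hw j) (hc j).1, hsum ▸
    Finset.sum_le_sum fun j _ => mul_le_of_le_one_right (hw j) (hc j).2⟩

/-- The open set of points of the open unit cube that are `δ`-close to a given point. -/
def cubeNhd {n : ℕ} (c : Fin n → ℝ) (δ : ℝ) : Set (Fin n → ℝ) :=
  univ.pi fun i => Ioo 0 1 ∩ Metric.ball (c i) δ

theorem isOpen_cubeNhd {n : ℕ} (c : Fin n → ℝ) (δ : ℝ) : IsOpen (cubeNhd c δ) :=
  isOpen_set_pi finite_univ fun _ _ => isOpen_Ioo.inter Metric.isOpen_ball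

theorem cubeNhd_nonempty {n : ℕ} {c : Fin n → ℝ} (hc : ∀ i, c i ∈ I) {δ : ℝ} (hδ : 0 < δ) :
    (cubeNhd c δ).Nonempty := by
  refine univ_pi_nonempty_iff.2 fun i => ?_
  have h : c i ∈ closure (Ioo (0 : ℝ) 1) := by
    rw [closure_Ioo zero_ne_one]
    exact hc i
  obtain ⟨t, ht, hd⟩ := Metric.mem_closure_iff.1 h δ hδ
  exact ⟨t, ht, by rwa [Metric.mem_ball, dist_comm]⟩

theorem exists_surjective_differences {m n q : ℕ} (hmq : 2 * m + 1 ≤ q) {a b : Fin q → Fin n}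
    (ha : Injective a) (hb : Injective b) (hab : ∀ i, a i ≠ b i) :
    ∃ J : Finset (Fin q), m + 1 ≤ J.card ∧
      ∀ t : J → ℝ, ∃ v : Fin n → ℝ, ∀ i : J, v (a i) - v (b i) = t i := by
  have hcard : (Finset.univ.filter fun i => a i < b i).card +
      (Finset.univ.filter fun i => ¬ a i < b i).card = q := by
    rw [Finset.card_filter_add_card_filter_not, Finset.card_univ, Fintype.card_fin]
  rcases le_or_gt (m + 1) (Finset.univ.filter fun i => a i < b i).card with h | h
  · refine ⟨_, h, fun t => ?_⟩
    obtain ⟨v, hv⟩ := exists_forall_sub_eq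
      (a := fun i : (Finset.univ.filter fun i => a i < b i : Finset (Fin q)) => (a i : ℕ))
      (b := fun i => (b i : ℕ))
      (fun i j hij => Subtype.ext (hb (Fin.ext hij)))
      (fun i => (Finset.mem_filter.1 i.2).2) t n
    exact ⟨fun i => v i, fun i => hv i (b i).2⟩
  · refine ⟨_, (by omega : m + 1 ≤ (Finset.univ.filter fun i => ¬ a i < b i).card), fun t => ?_⟩
    obtain ⟨v, hv⟩ := exists_forall_sub_eq
      (a := fun i : (Finset.univ.filter fun i => ¬ a i < b i : Finset (Fin q)) => (b i : ℕ))
      (b := fun i => (a i : ℕ))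
      (fun i j hij => Subtype.ext (ha (Fin.ext hij)))
      (fun i => (lt_of_le_of_ne (not_lt.1 (Finset.mem_filter.1 i.2).2) (hab i).symm :
        b i < a i)) (-t) n
    refine ⟨fun i => v i, fun i => ?_⟩
    have := hv i (a i).2
    simp only [Pi.neg_apply] at this
    linarith

theorem exists_separating_on_orbit_segment {X Y : Type*} [TopologicalSpace X] [CompactSpace X]
    [NormalSpace X] [TopologicalSpace Y] [CompactSpace Y] [T2Space Y] {m n q : ℕ}
    (hY : CovDimLE Y m) {e : Fin n × Y → X} (he : IsClosedEmbedding e) (hmq : 2 * m + 1 ≤ q)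
    {a b : Fin q → Fin n} (ha : Injective a) (hb : Injective b) (hab : ∀ i, a i ≠ b i)
    (f : C(X, I)) {ε : ℝ} (hε : 0 < ε) :
    ∃ h : C(X, I), dist h f ≤ ε ∧ ∀ y, ∃ i, h (e (a i, y)) ≠ h (e (b i, y)) := by
  obtain ⟨J, hJ, hsurj⟩ := exists_surjective_differences hmq ha hb hab
  have hec := he.continuous
  obtain ⟨k, ψ, c, hψ0, hψ1, hψm, hc, hcf⟩ :=
    hY.exists_partitionOfUnity (f := fun y i => (f (e (i, y)) : ℝ)) (by fun_prop)
      (fun y i => (f (e (i, y))).2) (half_pos hε)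
  let L : (Fin n → ℝ) →ₗ[ℝ] (J → ℝ) :=
    { toFun := fun v i => v (a i) - v (b i)
      map_add' := fun v w => by ext i; simp only [Pi.add_apply]; ring
      map_smul' := fun r v => by ext i; simp [mul_sub] }
  have hL : Surjective L := fun t => (hsurj t).imp fun v hv => funext hv
  obtain ⟨v, hv, hgp⟩ := exists_generalPosition (s := m) L.toAffineMap
    (by simp [hL.range_eq])
    (by simpa using hJ) (Empty.elim : Empty → J → ℝ) (fun j => cubeNhd (c j) (ε / 2))
    (fun j => isOpen_cubeNhd _ _) (fun j => cubeNhd_nonempty (hc j) (half_pos hε))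
  obtain ⟨h, hdist, hh⟩ := exists_extension_dist_le he f
    ⟨fun z => ∑ j, ψ j z.2 * v j z.1, by
      refine continuous_finsetSum _ fun j _ => ((ψ j).continuous.comp continuous_snd).mul ?_
      exact (continuous_of_discreteTopology (f := v j)).comp continuous_fst⟩
    (fun z => sum_mul_mem_unitInterval (fun j => hψ0 j z.2) (hψ1 z.2)
      fun j => Ioo_subset_Icc_self (hv j z.1 (mem_univ _)).1) hε.le
    (fun z => abs_sum_mul_sub_le (fun j => hψ0 j z.2) (hψ1 z.2) fun j hj => by
      have h1 := hcf j z.2 hj z.1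
      have h2 : |v j z.1 - c j z.1| < ε / 2 := (hv j z.1 (mem_univ _)).2
      exact (abs_sub_le _ (c j z.1) _).trans (by simp only [Prod.mk.eta] at h1; linarith))
  refine ⟨h, hdist, fun y => ?_⟩
  by_contra! hcon
  have hzero : (fun j => ψ j y) = 0 := by
    refine hgp 0 (fun j => ψ j y) (by simpa using hψm y) ?_
    ext i
    have h1 := congrArg (Subtype.val : I → ℝ) (hcon i)
    rw [hh, hh] at h1
    simp only [ContinuousMap.coe_mk] at h1
    simp [L, mul_sub, h1]
  have h1 := hψ1 y
  simp [fun j => congrFun hzero j] at h1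

theorem span_range_prodMk_one {V : Type*} [AddCommGroup V] [Module ℝ V] :
    Submodule.span ℝ (range fun v : V => (v, (1 : ℝ))) = ⊤ := by
  rw [eq_top_iff]
  rintro ⟨v, r⟩ -
  have h0 : ((0 : V), (1 : ℝ)) ∈ Submodule.span ℝ (range fun v : V => (v, (1 : ℝ))) :=
    Submodule.subset_span ⟨0, rfl⟩
  have hv : (v, (1 : ℝ)) ∈ Submodule.span ℝ (range fun v : V => (v, (1 : ℝ))) :=
    Submodule.subset_span ⟨v, rfl⟩
  convert Submodule.add_mem _ hv (Submodule.smul_mem _ (r - 1) h0) using 1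
  simp

theorem exists_separating_on_disjoint_segments {X Y Z : Type*} [TopologicalSpace X]
    [CompactSpace X] [NormalSpace X] [TopologicalSpace Y] [CompactSpace Y] [T2Space Y]
    [TopologicalSpace Z] [CompactSpace Z] [T2Space Z] {m m' p q : ℕ}
    (hY : CovDimLE Y m) (hZ : CovDimLE Z m') {e : (Fin p × Y) ⊕ (Fin q × Z) → X}
    (he : IsClosedEmbedding e) (hmq : m + m' + 1 ≤ q) (a : Fin q → Fin p)
    (f : C(X, I)) {ε : ℝ} (hε : 0 < ε) :
    ∃ h : C(X, I), dist h f ≤ ε ∧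
      ∀ y z, ∃ i, h (e (.inl (a i, y))) ≠ h (e (.inr (i, z))) := by
  have hec := he.continuous
  obtain ⟨k, ψ, c, hψ0, hψ1, hψm, hc, hcf⟩ :=
    hY.exists_partitionOfUnity (f := fun y i => (f (e (.inl (i, y))) : ℝ)) (by fun_prop)
      (fun y i => (f (e (.inl (i, y)))).2) (half_pos hε)
  obtain ⟨k', ψ', c', hψ0', hψ1', hψm', hc', hcf'⟩ :=
    hZ.exists_partitionOfUnity (f := fun z i => (f (e (.inr (i, z))) : ℝ)) (by fun_prop)
      (fun z i => (f (e (.inr (i, z)))).2) (half_pos hε)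
  let L : (Fin q → ℝ) →ᵃ[ℝ] (Fin q → ℝ) × ℝ :=
    (AffineMap.id ℝ (Fin q → ℝ)).prod (AffineMap.const ℝ (Fin q → ℝ) (1 : ℝ))
  obtain ⟨v, hv, hgp⟩ := exists_generalPosition (s := m + m' + 1) L
    span_range_prodMk_one
    (by simp; omega) (fun j : Fin k => ((fun i => c j (a i), 1) : (Fin q → ℝ) × ℝ))
    (fun j => cubeNhd (c' j) (ε / 2))
    (fun j => isOpen_cubeNhd _ _) (fun j => cubeNhd_nonempty (hc' j) (half_pos hε))
  obtain ⟨h, hdist, hh⟩ := exists_extension_dist_le he f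
    ⟨Sum.elim (fun z => ∑ j, ψ j z.2 * c j z.1) (fun z => ∑ j, ψ' j z.2 * v j z.1), by
      refine Continuous.sumElim ?_ ?_
      · refine continuous_finsetSum _ fun j _ => ((ψ j).continuous.comp continuous_snd).mul ?_
        exact (continuous_of_discreteTopology (f := c j)).comp continuous_fst
      · refine continuous_finsetSum _ fun j _ => ((ψ' j).continuous.comp continuous_snd).mul ?_
        exact (continuous_of_discreteTopology (f := v j)).comp continuous_fst⟩
    (by
      rintro (z | z)
      · exact sum_mul_mem_unitInterval (fun j => hψ0 j z.2) (hψ1 z.2) fun j => hc j z.1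
      · exact sum_mul_mem_unitInterval (fun j => hψ0' j z.2) (hψ1' z.2)
          fun j => Ioo_subset_Icc_self (hv j z.1 (mem_univ _)).1) hε.le
    (by
      rintro (z | z)
      · refine abs_sum_mul_sub_le (fun j => hψ0 j z.2) (hψ1 z.2) fun j hj => ?_
        have h1 := hcf j z.2 hj z.1
        simp only [Prod.mk.eta] at h1
        linarith
      · refine abs_sum_mul_sub_le (fun j => hψ0' j z.2) (hψ1' z.2) fun j hj => ?_
        have h1 := hcf' j z.2 hj z.1
        have h2 : |v j z.1 - c' j z.1| < ε / 2 := (hv j z.1 (mem_univ _)).2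
        exact (abs_sub_le _ (c' j z.1) _).trans (by simp only [Prod.mk.eta] at h1; linarith))
  refine ⟨h, hdist, fun y z => ?_⟩
  by_contra! hcon
  have hzero : (fun j => -ψ' j z) = 0 := by
    refine hgp (fun j => ψ j y) (fun j => -ψ' j z) ?_ ?_
    · have h1 : (support fun j => -ψ' j z) = support fun j => ψ' j z := by ext; simp
      rw [h1]
      have := hψm y
      have := hψm' z
      omega
    · refine Prod.ext ?_ ?_
      · ext i
        have h1 := congrArg (Subtype.val : I → ℝ) (hcon i)
        rw [hh, hh] at h1
        simp only [ContinuousMap.coe_mk, Sum.elim_inl, Sum.elim_inr] at h1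
        simp [L, Prod.fst_sum, h1]
      · simp [L, Prod.snd_sum, hψ1, hψ1']
  have h1 := hψ1' z
  simp [fun j => neg_eq_zero.1 (congrFun hzero j)] at h1

theorem isOpen_DSet {X : Type*} [TopologicalSpace X] [CompactSpace X] [T2Space X] {T : X → X}
    (hT : Continuous T) (d : ℕ) {K : Set (X × X)} (hK : IsCompact K) : IsOpen (DSet T d K) := by
  rw [isOpen_iff_eventually]
  intro h hh
  refine hK.eventually_forall_of_forall_eventually fun p hp => ?_
  have hc : ∀ g : X × X → X, Continuous g →
      Continuous fun z : C(X, I) × X × X => delayMap T d z.1 (g z.2) := fun g hg =>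
    continuous_pi fun i => by
      have := hT.iterate i
      unfold delayMap
      fun_prop
  exact (isOpen_ne_fun (hc _ continuous_fst) (hc _ continuous_snd)).mem_nhds (hh p hp)

theorem DSet_anti {X : Type*} [TopologicalSpace X] (T : X → X) (d : ℕ) {K K' : Set (X × X)}
    (h : K ⊆ K') : DSet T d K' ⊆ DSet T d K :=
  fun _ hf p hp => hf p (h hp)

theorem DSet_image_swap {X : Type*} [TopologicalSpace X] (T : X → X) (d : ℕ) (K : Set (X × X)) :
    DSet T d (Prod.swap '' K) = DSet T d K := by
  ext h
  simp only [DSet, mem_ofPred_eq, forall_mem_image, Prod.fst_swap, Prod.snd_swap]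
  exact forall₂_congr fun p _ => ne_comm

/-- Density of `DSet T d K` can be checked locally on the compact set `K`. -/
theorem dense_DSet_of_locally {X : Type*} [TopologicalSpace X] [CompactSpace X] [T2Space X]
    {T : X → X} (hT : Continuous T) (d : ℕ) {K : Set (X × X)} (hK : IsCompact K)
    (h : ∀ z ∈ K, ∃ U ∈ 𝓝 z, ∀ K' ⊆ K ∩ U, IsCompact K' → Dense (DSet T d K')) :
    Dense (DSet T d K) := by
  suffices H : ∃ G ⊆ DSet T d K, IsOpen G ∧ Dense G by
    obtain ⟨G, hG, -, hd⟩ := H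
    exact hd.mono hG
  refine hK.induction_on (p := fun s => ∃ G ⊆ DSet T d s, IsOpen G ∧ Dense G) ?_ ?_ ?_ ?_
  · exact ⟨univ, fun _ _ p hp => hp.elim, isOpen_univ, dense_univ⟩
  · rintro s t hst ⟨G, hG, ho, hd⟩
    exact ⟨G, hG.trans (DSet_anti T d hst), ho, hd⟩
  · rintro s t ⟨G, hG, ho, hd⟩ ⟨G', hG', ho', hd'⟩
    refine ⟨G ∩ G', fun f hf p hp => ?_, ho.inter ho', hd.inter_of_isOpen_left hd' ho⟩
    exact hp.elim (hG hf.1 p) (hG' hf.2 p)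
  · intro z hz
    obtain ⟨U, hU, hUK⟩ := h z hz
    obtain ⟨C, hC, hCc, hCU⟩ := exists_mem_nhds_isClosed_subset hU
    refine ⟨K ∩ C, inter_mem_nhdsWithin K hC, DSet T d (K ∩ C), subset_rfl, ?_, ?_⟩
    · exact isOpen_DSet hT d (hK.inter_right hCc)
    · exact hUK _ (inter_subset_inter_right _ hCU) (hK.inter_right hCc)

/-- `S` is a countable union of compact sets `K` for which `DSet T d K` is open and dense. -/
def IsCountableUnionOfGeneric {X : Type*} [TopologicalSpace X] [CompactSpace X] [T2Space X]
    (T : X → X) (d : ℕ) (S : Set (X × X)) : Prop :=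
  ∃ 𝒦 : Set (Set (X × X)), 𝒦.Countable ∧ ⋃₀ 𝒦 = S ∧
    ∀ K ∈ 𝒦, IsCompact K ∧ IsOpen (DSet T d K) ∧ Dense (DSet T d K)

namespace IsCountableUnionOfGeneric

variable {X : Type*}

theorem iUnion [TopologicalSpace X] [CompactSpace X] [T2Space X] {T : X → X} {d : ℕ}
    {ι : Sort*} [Countable ι] {S : ι → Set (X × X)}
    (h : ∀ i, IsCountableUnionOfGeneric T d (S i)) :
    IsCountableUnionOfGeneric T d (⋃ i, S i) := by
  choose 𝒦 hc hU hK using h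
  refine ⟨⋃ i, 𝒦 i, countable_iUnion hc, ?_, fun K hKm => ?_⟩
  · rw [sUnion_iUnion]
    exact iUnion_congr hU
  · obtain ⟨i, hi⟩ := mem_iUnion.1 hKm
    exact hK i K hi

theorem union [TopologicalSpace X] [CompactSpace X] [T2Space X] {T : X → X} {d : ℕ}
    {S S' : Set (X × X)} (h : IsCountableUnionOfGeneric T d S)
    (h' : IsCountableUnionOfGeneric T d S') : IsCountableUnionOfGeneric T d (S ∪ S') := by
  rw [union_eq_iUnion]
  exact iUnion fun b => by cases b <;> assumption

theorem image_swap [TopologicalSpace X] [CompactSpace X] [T2Space X] {T : X → X} {d : ℕ}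
    {S : Set (X × X)} (h : IsCountableUnionOfGeneric T d S) :
    IsCountableUnionOfGeneric T d (Prod.swap '' S) := by
  obtain ⟨𝒦, hc, rfl, hK⟩ := h
  refine ⟨image Prod.swap '' 𝒦, hc.image _, (image_sUnion ..).symm, ?_⟩
  rintro _ ⟨K, hKm, rfl⟩
  rw [DSet_image_swap]
  exact ⟨(hK K hKm).1.image continuous_swap, (hK K hKm).2⟩

theorem exists_nat [TopologicalSpace X] [CompactSpace X] [T2Space X] {T : X → X} {d : ℕ}
    {S : Set (X × X)} (h : IsCountableUnionOfGeneric T d S) :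
    ∃ K : ℕ → Set (X × X), (⋃ i, K i) = S ∧
      ∀ i, IsCompact (K i) ∧ IsOpen (DSet T d (K i)) ∧ Dense (DSet T d (K i)) := by
  obtain ⟨𝒦, hc, rfl, hK⟩ := h
  have hempty : DSet T d ∅ = univ := eq_univ_of_forall fun _ p hp => hp.elim
  obtain ⟨K, hKr⟩ := (hc.insert ∅).exists_eq_range (insert_nonempty _ _)
  refine ⟨K, ?_, fun i => ?_⟩
  · rw [← sUnion_range, ← hKr, sUnion_insert, empty_union]
  · rcases (hKr ▸ mem_range_self i : K i ∈ insert ∅ 𝒦) with hi | hi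
    · rw [hi, hempty]
      exact ⟨isCompact_empty, isOpen_univ, dense_univ⟩
    · exact hK _ hi

theorem of_isLocallyClosed [MetricSpace X] [CompactSpace X] {T : X → X} (hT : Continuous T)
    {d : ℕ} {S : Set (X × X)} (hS : IsLocallyClosed S)
    (h : ∀ z ∈ S, ∃ U ∈ 𝓝 z, ∀ K ⊆ S ∩ U, IsCompact K → Dense (DSet T d K)) :
    IsCountableUnionOfGeneric T d S := by
  obtain ⟨O, C, hO, hC, rfl⟩ := hS
  obtain ⟨F, hF, -, hFO, -⟩ := hO.exists_iUnion_isClosed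
  refine ⟨range fun n => F n ∩ C, countable_range _, ?_, ?_⟩
  · rw [sUnion_range, ← iUnion_inter, hFO]
  · rintro _ ⟨n, rfl⟩
    have hsub : F n ∩ C ⊆ O ∩ C := inter_subset_inter_left _ (hFO ▸ subset_iUnion F n)
    have hcomp : IsCompact (F n ∩ C) := ((hF n).inter hC).isCompact
    refine ⟨hcomp, isOpen_DSet hT d hcomp, dense_DSet_of_locally hT d hcomp fun z hz => ?_⟩
    obtain ⟨U, hU, hUK⟩ := h z (hsub hz)
    exact ⟨U, hU, fun K hK => hUK K (hK.trans (inter_subset_inter_left _ hsub))⟩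

end IsCountableUnionOfGeneric

theorem exists_ball_separated {X κ : Type*} [MetricSpace X] [Finite κ] (x : X)
    (u : κ → X → X) (hu : ∀ k, Continuous (u k)) (hinj : Injective fun k => u k x) :
    ∃ δ > 0, ∀ k k', k ≠ k' → ∀ a ∈ Metric.ball x δ, ∀ b ∈ Metric.ball x δ,
      u k a ≠ u k' b := by
  have hd : Pairwise (Disjoint on fun k => 𝓝 (u k x)) := fun k k' hk =>
    disjoint_nhds_nhds.2 (hinj.ne hk)
  obtain ⟨O, hO, hdisj⟩ := hd.exists_mem_filter_of_disjoint
  have hev : ∀ k, ∀ᶠ δ in 𝓝[>] (0 : ℝ), Metric.ball x δ ⊆ u k ⁻¹' O k := by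
    intro k
    obtain ⟨r, hr, hrO⟩ := Metric.mem_nhds_iff.1 ((hu k).continuousAt.preimage_mem_nhds (hO k))
    filter_upwards [Ioo_mem_nhdsGT hr] with δ hδ
    exact (Metric.ball_subset_ball hδ.2.le).trans hrO
  obtain ⟨δ, hδO, hδ⟩ := ((Filter.eventually_all.2 hev).and self_mem_nhdsWithin).exists
  refine ⟨δ, hδ, fun k k' hk a ha b hb hab => ?_⟩
  exact disjoint_left.1 (hdisj hk) (hδO k ha) (hab ▸ hδO k' hb)

/-- The points whose first `N` iterates are distinct and which, if `N ≤ 4 * d`, have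
minimal period `N`. -/
def periodStratum {X : Type*} (T : X → X) (d N : ℕ) : Set X :=
  {x | (∀ i, 0 < i → i < N → T^[i] x ≠ x) ∧ (N ≤ 4 * d → T^[N] x = x)}

section periodStratum

variable {X : Type*} {T : X → X} {d N : ℕ}

theorem exists_mem_periodStratum (T : X → X) (d : ℕ) (x : X) :
    ∃ N, 1 ≤ N ∧ N ≤ 4 * d + 1 ∧ x ∈ periodStratum T d N := by
  classical
  by_cases h : ∃ i, 1 ≤ i ∧ i ≤ 4 * d ∧ T^[i] x = x
  · obtain ⟨h1, h2, h3⟩ := Nat.find_spec h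
    refine ⟨Nat.find h, h1, by omega, fun i hi hiN hx => ?_, fun _ => h3⟩
    exact Nat.find_min h hiN ⟨hi, by omega, hx⟩
  · exact ⟨4 * d + 1, by omega, le_rfl, fun i hi hiN hx => h ⟨i, hi, by omega, hx⟩,
      fun hN => by omega⟩

theorem eq_of_iterate_eq_of_mem_periodStratum (hT : Injective T) {x : X}
    (hx : x ∈ periodStratum T d N) {i j : ℕ} (hi : i < N) (hj : j < N)
    (h : T^[i] x = T^[j] x) : i = j := by
  wlog hij : i ≤ j generalizing i j
  · exact (this hj hi h.symm (le_of_not_ge hij)).symm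
  obtain ⟨k, rfl⟩ := Nat.exists_eq_add_of_le hij
  rw [iterate_add_apply] at h
  rcases Nat.eq_zero_or_pos k with rfl | hk
  · rfl
  · exact absurd (hT.iterate i h).symm (hx.1 k hk (by omega))

theorem iterate_mod_of_mem_periodStratum {x : X} (hx : x ∈ periodStratum T d N) {i : ℕ}
    (hi : i ≤ 4 * d) : T^[i % N] x = T^[i] x := by
  by_cases hN : N ≤ 4 * d
  · exact IsPeriodicPt.iterate_mod_apply (hx.2 hN) i
  · rw [Nat.mod_eq_of_lt (by omega)]

theorem isLocallyClosed_periodStratum [TopologicalSpace X] [T2Space X] (hT : Continuous T) :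
    IsLocallyClosed (periodStratum T d N) := by
  refine IsOpen.isLocallyClosed ?_ |>.inter (IsClosed.isLocallyClosed ?_)
  · have h : {x : X | ∀ i, 0 < i → i < N → T^[i] x ≠ x} =
        ⋂ i ∈ {i | 0 < i ∧ i < N}, {x | T^[i] x ≠ x} := by
      ext x; simp
    change IsOpen {x : X | ∀ i, 0 < i → i < N → T^[i] x ≠ x}
    rw [h]
    exact ((finite_lt_nat N).subset fun i hi => hi.2).isOpen_biInter
      fun i _ => isOpen_ne_fun (hT.iterate i) continuous_id
  · change IsClosed {x : X | N ≤ 4 * d → T^[N] x = x}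
    by_cases hN : N ≤ 4 * d
    · simpa [hN] using isClosed_eq (hT.iterate N) continuous_id
    · simp [hN]

theorem exists_covDimLE_of_subset_periodStratum [MetricSpace X] [CompactSpace X]
    (hdim : covDim X = d)
    (hper : ∀ n : ℕ, 1 ≤ n → n ≤ 2 * d → 2 * covDim (periodicLE T n) < (n : ℕ∞)) (hN : 1 ≤ N) :
    ∃ m, 2 * m + 1 ≤ N ∧ m ≤ d ∧
      ∀ Y ⊆ periodStratum T d N, IsCompact Y → CovDimLE Y m := by
  by_cases hNd : N ≤ 2 * d
  · have h := hper N hN hNd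
    obtain ⟨m, hm⟩ : ∃ m : ℕ, covDim (periodicLE T N) = m := by
      refine (ENat.ne_top_iff_exists.1 fun htop => ?_).imp fun m hm => hm.symm
      rw [htop] at h
      simp at h
    rw [hm] at h
    have h' : 2 * m < N := by exact_mod_cast h
    refine ⟨m, by omega, by omega, fun Y hY hYc => ?_⟩
    have hsub : Y ⊆ periodicLE T N := fun x hx => ⟨N, hN, le_rfl, (hY hx).2 (by omega)⟩
    have := isCompact_iff_compactSpace.1 hYc
    exact (CovDimLE.of_covDim_eq hm).of_isClosedEmbedding_s1
      ((continuous_inclusion hsub).isClosedEmbedding (inclusion_injective hsub))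
  · exact ⟨d, by omega, le_rfl, fun Y _ hYc =>
      (CovDimLE.of_covDim_eq hdim).of_isClosedEmbedding_s1 hYc.isClosed.isClosedEmbedding_subtypeVal⟩

end periodStratum

section Density

variable {X : Type*} [MetricSpace X] [CompactSpace X] {T : X → X} {d : ℕ}

theorem dense_DSet_of_sameOrbit (hTc : Continuous T) (hTi : Injective T) {N l m : ℕ}
    (hl : l ≤ 2 * d) (hmN : 2 * m + 1 ≤ N) (hmd : m ≤ d) {K : Set (X × X)} (hK : IsCompact K)
    (hdim : CovDimLE (Prod.fst '' K) m)
    (hKN : ∀ p ∈ K, p.1 ∈ periodStratum T d N ∧ p.2 = T^[l] p.1 ∧ p.1 ≠ p.2)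
    (hsep : ∀ i < N, ∀ j < N, i ≠ j → ∀ p ∈ K, ∀ p' ∈ K, T^[i] p.1 ≠ T^[j] p'.1) :
    Dense (DSet T d K) := by
  rcases K.eq_empty_or_nonempty with rfl | ⟨p₀, hp₀⟩
  · exact dense_univ.mono fun _ _ p hp => hp.elim
  have hcomp := isCompact_iff_compactSpace.1 (hK.image continuous_fst)
  have hmod : ∀ p ∈ K, ∀ i ≤ 2 * d, T^[(i + l) % N] p.1 = T^[i] p.2 := fun p hp i hi => by
    rw [iterate_mod_of_mem_periodStratum (hKN p hp).1 (by omega), (hKN p hp).2.1,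
      iterate_add_apply]
  let e : Fin N × (Prod.fst '' K) → X := fun z => T^[z.1] z.2
  have he : IsClosedEmbedding e := by
    refine Continuous.isClosedEmbedding ?_ ?_
    · refine continuous_prod_of_discrete_left.2 fun i => ?_
      exact (hTc.iterate i).comp continuous_subtype_val
    · rintro ⟨i, ⟨_, p, hp, rfl⟩⟩ ⟨j, ⟨_, p', hp', rfl⟩⟩ hij
      have h1 : (i : ℕ) = j := by
        by_contra hne
        exact hsep i i.2 j j.2 hne p hp p' hp' hij
      obtain rfl := Fin.ext h1
      have h2 : p.1 = p'.1 := hTi.iterate i hij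
      simp [h2]
  have hpos : 0 < N := by omega
  refine Metric.dense_iff.2 fun f ε hε => ?_
  obtain ⟨h, hdist, hh⟩ := exists_separating_on_orbit_segment (q := min N (2 * d + 1)) hdim he
    (by omega) (a := fun i => ⟨i, by omega⟩) (b := fun i => ⟨(i + l) % N, Nat.mod_lt _ hpos⟩)
    (fun i j hij => Fin.ext (by simpa using hij))
    (fun i j hij => by
      have h1 := congrArg (fun k : Fin N => T^[k] p₀.1) hij
      simp only at h1
      rw [hmod p₀ hp₀ i (by omega), hmod p₀ hp₀ j (by omega), (hKN p₀ hp₀).2.1,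
        ← iterate_add_apply, ← iterate_add_apply, add_comm, add_comm (j : ℕ), iterate_add_apply,
        iterate_add_apply] at h1
      exact Fin.ext (eq_of_iterate_eq_of_mem_periodStratum hTi (hKN p₀ hp₀).1 (by omega)
        (by omega) (hTi.iterate l h1)))
    (fun i hij => by
      have h1 := congrArg (fun k : Fin N => T^[k] p₀.1) hij
      simp only at h1
      rw [hmod p₀ hp₀ i (by omega)] at h1
      exact (hKN p₀ hp₀).2.2 (hTi.iterate i h1))
    f (half_pos hε)
  refine ⟨h, hdist.trans_lt (half_lt_self hε), fun p hp heq => ?_⟩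
  obtain ⟨i, hi⟩ := hh ⟨p.1, p, hp, rfl⟩
  refine hi ?_
  simp only [e]
  rw [hmod p hp i (by omega)]
  exact congrFun heq ⟨i, by omega⟩

theorem dense_DSet_of_disjointOrbits (hTc : Continuous T) (hTi : Injective T) {p q m m' : ℕ}
    (hpq : p ≤ q) (hmp : 2 * m + 1 ≤ p) (hmd : m ≤ d) (hmq : 2 * m' + 1 ≤ q) (hmd' : m' ≤ d)
    {K : Set (X × X)} (hK : IsCompact K)
    (hdim : CovDimLE (Prod.fst '' K) m) (hdim' : CovDimLE (Prod.snd '' K) m')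
    (hKp : ∀ z ∈ K, z.1 ∈ periodStratum T d p)
    (hsep : ∀ i < p, ∀ j < p, i ≠ j → ∀ z ∈ K, ∀ z' ∈ K, T^[i] z.1 ≠ T^[j] z'.1)
    (hsep' : ∀ i < q, ∀ j < q, i ≠ j → ∀ z ∈ K, ∀ z' ∈ K, T^[i] z.2 ≠ T^[j] z'.2)
    (hdisj : ∀ i ≤ 2 * d, ∀ j ≤ 2 * d, ∀ z ∈ K, ∀ z' ∈ K, T^[i] z.1 ≠ T^[j] z'.2) :
    Dense (DSet T d K) := by
  have hcomp := isCompact_iff_compactSpace.1 (hK.image continuous_fst)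
  have hcomp' := isCompact_iff_compactSpace.1 (hK.image continuous_snd)
  let e : (Fin (min p (2 * d + 1)) × (Prod.fst '' K)) ⊕
      (Fin (min q (2 * d + 1)) × (Prod.snd '' K)) → X :=
    Sum.elim (fun z => T^[z.1] z.2) (fun z => T^[z.1] z.2)
  have he : IsClosedEmbedding e := by
    refine Continuous.isClosedEmbedding ?_ (Injective.sumElim ?_ ?_ ?_)
    · refine Continuous.sumElim ?_ ?_ <;>
      exact continuous_prod_of_discrete_left.2 fun i =>
        (hTc.iterate i).comp continuous_subtype_val
    · rintro ⟨i, ⟨_, z, hz, rfl⟩⟩ ⟨j, ⟨_, z', hz', rfl⟩⟩ hij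
      have h1 : (i : ℕ) = j := by
        by_contra hne
        exact hsep i (by omega) j (by omega) hne z hz z' hz' hij
      obtain rfl := Fin.ext h1
      have h2 : z.1 = z'.1 := hTi.iterate i hij
      simp [h2]
    · rintro ⟨i, ⟨_, z, hz, rfl⟩⟩ ⟨j, ⟨_, z', hz', rfl⟩⟩ hij
      have h1 : (i : ℕ) = j := by
        by_contra hne
        exact hsep' i (by omega) j (by omega) hne z hz z' hz' hij
      obtain rfl := Fin.ext h1
      have h2 : z.2 = z'.2 := hTi.iterate i hij
      simp [h2]
    · rintro ⟨i, ⟨_, z, hz, rfl⟩⟩ ⟨j, ⟨_, z', hz', rfl⟩⟩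
      exact hdisj i (by omega) j (by omega) z hz z' hz'
  have hpos : 0 < min p (2 * d + 1) := by omega
  refine Metric.dense_iff.2 fun f ε hε => ?_
  obtain ⟨h, hdist, hh⟩ := exists_separating_on_disjoint_segments hdim hdim' he
    (by omega) (fun i => ⟨i % min p (2 * d + 1), Nat.mod_lt _ hpos⟩) f (half_pos hε)
  refine ⟨h, hdist.trans_lt (half_lt_self hε), fun z hz heq => ?_⟩
  obtain ⟨i, hi⟩ := hh ⟨z.1, z, hz, rfl⟩ ⟨z.2, z, hz, rfl⟩
  have hmod : T^[i % min p (2 * d + 1)] z.1 = T^[i] z.1 := by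
    rcases le_total p (2 * d + 1) with hle | hle
    · rw [min_eq_left hle]
      rcases Nat.lt_or_ge i p with hip | hip
      · rw [Nat.mod_eq_of_lt hip]
      · exact iterate_mod_of_mem_periodStratum (hKp z hz) (by omega)
    · rw [min_eq_right hle, Nat.mod_eq_of_lt (by omega)]
  refine hi ?_
  simp only [e, Sum.elim_inl, Sum.elim_inr]
  rw [hmod]
  exact congrFun heq ⟨i, by omega⟩

theorem isCountableUnionOfGeneric_sameOrbit (hTc : Continuous T) (hTi : Injective T)
    (hdim : covDim X = d)
    (hper : ∀ n : ℕ, 1 ≤ n → n ≤ 2 * d → 2 * covDim (periodicLE T n) < (n : ℕ∞))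
    {N l : ℕ} (hN : 1 ≤ N) (hl : l ≤ 2 * d) :
    IsCountableUnionOfGeneric T d
      {p : X × X | p.1 ∈ periodStratum T d N ∧ p.2 = T^[l] p.1 ∧ p.1 ≠ p.2} := by
  obtain ⟨m, hmN, hmd, hm⟩ := exists_covDimLE_of_subset_periodStratum hdim hper hN
  refine .of_isLocallyClosed hTc ?_ fun z hz => ?_
  · exact ((isLocallyClosed_periodStratum hTc).preimage continuous_fst).inter
      ((isClosed_eq continuous_snd ((hTc.iterate l).comp continuous_fst)).isLocallyClosed.inter
        (isOpen_ne_fun continuous_fst continuous_snd).isLocallyClosed)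
  obtain ⟨δ, hδ, hsep⟩ := exists_ball_separated z.1 (fun i : Fin N => T^[i])
    (fun i => hTc.iterate i)
    (fun i j hij => Fin.ext (eq_of_iterate_eq_of_mem_periodStratum hTi hz.1 i.2 j.2 hij))
  refine ⟨Prod.fst ⁻¹' Metric.ball z.1 δ,
    continuous_fst.continuousAt.preimage_mem_nhds (Metric.ball_mem_nhds _ hδ),
    fun K hKU hK => ?_⟩
  refine dense_DSet_of_sameOrbit hTc hTi hl hmN hmd hK
    (hm _ (image_subset_iff.2 fun p hp => (hKU hp).1.1) (hK.image continuous_fst))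
    (fun p hp => (hKU hp).1) fun i hi j hj hij p hp p' hp' => ?_
  exact hsep ⟨i, hi⟩ ⟨j, hj⟩ (by simpa using hij) _ (hKU hp).2 _ (hKU hp').2

theorem isCountableUnionOfGeneric_disjointOrbits (hTc : Continuous T) (hTi : Injective T)
    (hdim : covDim X = d)
    (hper : ∀ n : ℕ, 1 ≤ n → n ≤ 2 * d → 2 * covDim (periodicLE T n) < (n : ℕ∞))
    {p q : ℕ} (hp : 1 ≤ p) (hpq : p ≤ q) :
    IsCountableUnionOfGeneric T d
      {z : X × X | z.1 ∈ periodStratum T d p ∧ z.2 ∈ periodStratum T d q ∧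
        ∀ i j : Fin (2 * d + 1), T^[i] z.1 ≠ T^[j] z.2} := by
  obtain ⟨m, hmp, hmd, hm⟩ := exists_covDimLE_of_subset_periodStratum hdim hper hp
  obtain ⟨m', hmq, hmd', hm'⟩ := exists_covDimLE_of_subset_periodStratum hdim hper (hp.trans hpq)
  refine .of_isLocallyClosed hTc ?_ fun z hz => ?_
  · refine ((isLocallyClosed_periodStratum hTc).preimage continuous_fst).inter
      (((isLocallyClosed_periodStratum hTc).preimage continuous_snd).inter
        (IsOpen.isLocallyClosed ?_))
    change IsOpen {z : X × X | ∀ i j : Fin (2 * d + 1), T^[i] z.1 ≠ T^[j] z.2}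
    simp only [ofPred_forall]
    exact isOpen_iInter_of_finite fun i => isOpen_iInter_of_finite fun j =>
      isOpen_ne_fun ((hTc.iterate i).comp continuous_fst) ((hTc.iterate j).comp continuous_snd)
  obtain ⟨δ₁, hδ₁, hsep₁⟩ := exists_ball_separated z.1 (fun i : Fin p => T^[i])
    (fun i => hTc.iterate i)
    (fun i j hij => Fin.ext (eq_of_iterate_eq_of_mem_periodStratum hTi hz.1 i.2 j.2 hij))
  obtain ⟨δ₂, hδ₂, hsep₂⟩ := exists_ball_separated z.2 (fun i : Fin q => T^[i])
    (fun i => hTc.iterate i)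
    (fun i j hij => Fin.ext (eq_of_iterate_eq_of_mem_periodStratum hTi hz.2.1 i.2 j.2 hij))
  have hev : ∀ᶠ w : (X × X) × X × X in 𝓝 (z, z), ∀ i j : Fin (2 * d + 1),
      T^[i] w.1.1 ≠ T^[j] w.2.2 := by
    refine Filter.eventually_all.2 fun i => Filter.eventually_all.2 fun j => ?_
    exact (isOpen_ne_fun ((hTc.iterate i).comp (continuous_fst.comp continuous_fst))
      ((hTc.iterate j).comp (continuous_snd.comp continuous_snd))).mem_nhds (hz.2.2 i j)
  rw [nhds_prod_eq] at hev
  obtain ⟨U, hU, hsep⟩ := Filter.eventually_prod_self_iff'.1 hev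
  refine ⟨U ∩ Metric.ball z.1 δ₁ ×ˢ Metric.ball z.2 δ₂,
    Filter.inter_mem hU (prod_mem_nhds (Metric.ball_mem_nhds _ hδ₁) (Metric.ball_mem_nhds _ hδ₂)),
    fun K hKU hK => ?_⟩
  refine dense_DSet_of_disjointOrbits hTc hTi hpq hmp hmd hmq hmd' hK
    (hm _ (image_subset_iff.2 fun w hw => (hKU hw).1.1) (hK.image continuous_fst))
    (hm' _ (image_subset_iff.2 fun w hw => (hKU hw).1.2.1) (hK.image continuous_snd))
    (fun w hw => (hKU hw).1.1) (fun i hi j hj hij w hw w' hw' => ?_)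
    (fun i hi j hj hij w hw w' hw' => ?_) (fun i hi j hj w hw w' hw' => ?_)
  · exact hsep₁ ⟨i, hi⟩ ⟨j, hj⟩ (by simpa using hij) _ (hKU hw).2.2.1 _ (hKU hw').2.2.1
  · exact hsep₂ ⟨i, hi⟩ ⟨j, hj⟩ (by simpa using hij) _ (hKU hw).2.2.2 _ (hKU hw').2.2.2
  · exact hsep w (hKU hw).2.1 w' (hKU hw').2.1 ⟨i, by omega⟩ ⟨j, by omega⟩

end Density

theorem offDiag_eq_iUnion_strata {X : Type*} {T : X → X} (hTi : Injective T) (d : ℕ) :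
    {p : X × X | p.1 ≠ p.2} =
      (⋃ (N : {N : ℕ // 1 ≤ N}) (l : Fin (2 * d + 1)),
        ({p : X × X | p.1 ∈ periodStratum T d N ∧ p.2 = T^[l] p.1 ∧ p.1 ≠ p.2} ∪
          Prod.swap '' {p : X × X | p.1 ∈ periodStratum T d N ∧ p.2 = T^[l] p.1 ∧ p.1 ≠ p.2})) ∪
      ⋃ r : {r : ℕ × ℕ // 1 ≤ r.1 ∧ r.1 ≤ r.2},
        ({z : X × X | z.1 ∈ periodStratum T d r.1.1 ∧ z.2 ∈ periodStratum T d r.1.2 ∧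
            ∀ i j : Fin (2 * d + 1), T^[i] z.1 ≠ T^[j] z.2} ∪
          Prod.swap '' {z : X × X | z.1 ∈ periodStratum T d r.1.1 ∧
            z.2 ∈ periodStratum T d r.1.2 ∧ ∀ i j : Fin (2 * d + 1), T^[i] z.1 ≠ T^[j] z.2}) := by
  have key : ∀ (x y : X) (i j : Fin (2 * d + 1)), j ≤ i → T^[i] x = T^[j] y →
      ∃ l : Fin (2 * d + 1), y = T^[l] x := by
    intro x y i j hji h
    refine ⟨⟨i - j, by omega⟩, hTi.iterate j ?_⟩
    rw [← iterate_add_apply, Nat.add_sub_cancel' hji, h]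
  apply Subset.antisymm
  · rintro ⟨x, y⟩ (hxy : x ≠ y)
    obtain ⟨p, hp, -, hxp⟩ := exists_mem_periodStratum T d x
    obtain ⟨q, hq, -, hyq⟩ := exists_mem_periodStratum T d y
    by_cases h : ∃ i j : Fin (2 * d + 1), T^[i] x = T^[j] y
    · left
      obtain ⟨i, j, hij⟩ := h
      rcases le_total j i with hji | hji
      · obtain ⟨l, hl⟩ := key x y i j hji hij
        exact mem_iUnion₂.2 ⟨⟨p, hp⟩, l, Or.inl ⟨hxp, hl, hxy⟩⟩
      · obtain ⟨l, hl⟩ := key y x j i hji hij.symm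
        exact mem_iUnion₂.2 ⟨⟨q, hq⟩, l, Or.inr ⟨(y, x), ⟨hyq, hl, hxy.symm⟩, rfl⟩⟩
    · right
      push Not at h
      rcases le_total p q with hpq | hpq
      · exact mem_iUnion.2 ⟨⟨(p, q), hp, hpq⟩, Or.inl ⟨hxp, hyq, h⟩⟩
      · exact mem_iUnion.2 ⟨⟨(q, p), hq, hpq⟩,
          Or.inr ⟨(y, x), ⟨hyq, hxp, fun i j => (h j i).symm⟩, rfl⟩⟩
  · refine union_subset (iUnion₂_subset fun N l => union_subset ?_ ?_)
      (iUnion_subset fun r => union_subset ?_ ?_)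
    · exact fun p hp => hp.2.2
    · rintro _ ⟨p, hp, rfl⟩
      exact hp.2.2.symm
    · exact fun z hz => hz.2.2 0 0
    · rintro _ ⟨z, hz, rfl⟩
      exact (hz.2.2 0 0).symm

theorem stmt1 {X : Type*} [MetricSpace X] [CompactSpace X]
    (T : X → X) (hTc : Continuous T) (hTi : Function.Injective T)
    (d : ℕ) (hdim : covDim X = d)
    (hper : ∀ n : ℕ, 1 ≤ n → n ≤ 2 * d →
      2 * covDim (periodicLE T n) < (n : ℕ∞)) :
    ∃ K : ℕ → Set (X × X),
      (⋃ i, K i) = {p : X × X | p.1 ≠ p.2} ∧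
      ∀ i, IsCompact (K i) ∧ IsOpen (DSet T d (K i)) ∧ Dense (DSet T d (K i)) := by
  rw [offDiag_eq_iUnion_strata hTi d]
  refine IsCountableUnionOfGeneric.exists_nat (.union (.iUnion fun N => .iUnion fun l => ?_)
    (.iUnion fun r => ?_))
  · have h := isCountableUnionOfGeneric_sameOrbit hTc hTi hdim hper (l := l) N.2 (by omega)
    exact h.union h.image_swap
  · have h := isCountableUnionOfGeneric_disjointOrbits hTc hTi hdim hper r.2.1 r.2.2
    exact h.union h.image_swap
end
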